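/- Let Γ be a bipartite graph (possibly infinite) with sides M and W. Then there does NOT exist a marriage of M (a matching of Γ covering every vertex of M) if and only if there exists a subset A ⊆ M such that N(A) is matchable into A but A is not matchable into N(A), where N(A) denotes the set of neighbours of vertices of A. -/

import Mathlib

/-!
The graph on sides `A`, `B` (sets of men and women) has a *wave* `X` if `X ⊆ A` and all neighbours
of `X` in `B` are matched into `X`; it is *hindered* if some wave has a matching that leaves a man
of `X` single. Unions of waves are waves (`wave_iUnion`), so there is a largest wave `X`. Its
neighbourhood is matchable into it. The rest of the graph has no nonempty wave, so it is
unhindered. Everything therefore rests on the theorem that an unhindered graph has a marriage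
(`exists_matching`): if `X` were matchable into `N(X)`, the two matchings would form a marriage of
the whole graph (`exists_critical`).

For an unhindered graph one shows, by induction on the infinite cardinal `κ`, that a matching
missing at most `κ` men can be replaced by one missing nobody (`QProp`).

* One man can always be married off so that the rest stays unhindered (`single_step`). For
  `κ = ℵ₀` this is iterated (`QProp_aleph0`).
* For `κ` singular, the `κ` men are exhausted by fewer than `κ` sets of smaller size, and these
  sets are treated in parallel rows (`row`, `QProp_singular`). This needs that fewer than `κ` men
  can be married off with an unhindered rest (`SProp`).
* For `κ` regular uncountable, one builds a *ladder* of length `κ`, removing from the graph at each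
  stage a hindrance, if there is one, and fewer than `κ` women. If hindrances occurred stationarily
  often, they could be combined, by switching along alternating paths, into a hindrance of the
  whole graph (`hind_of_stat`, `Ladder.not_stat`). So there is a club of unhindered stages. Between
  consecutive stages of this club all men removed, and one more man, can be matched by the
  induction hypothesis, and these matchings are put together (`Ladder.combine`,
  `QProp_regular`). Stopping at a stage of the club gives `SProp` for all smaller cardinals
  (`SProp_of_lt`).
-/

set_option autoImplicit false

namespace Marriage
universe u
open Set

/-! ### Waves, hindrances and alternating paths -/

section Basic
variable {M W : Type u} (E : M → W → Prop)

/-- The neighbourhood `N(X)` of a set `X` of men. -/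
def Nbr (X : Set M) : Set W := {w | ∃ x ∈ X, E x w}

/-- `g` matches the men of `A` injectively to neighbours in `B`. Only the values of `g` on `A`
matter. -/
def IsMatching (A : Set M) (B : Set W) (g : M → W) : Prop :=
  InjOn g A ∧ ∀ m ∈ A, g m ∈ B ∧ E m (g m)

/-- `X` is a wave of the subgraph on `A` and `B`: all neighbours of `X` in `B` are matched
into `X` by `f`. -/
def IsWave (A : Set M) (B : Set W) (X : Set M) (f : W → M) : Prop :=
  X ⊆ A ∧ InjOn f (Nbr E X ∩ B) ∧ ∀ w ∈ Nbr E X ∩ B, f w ∈ X ∧ E (f w) w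

/-- `X` is a hindrance of the subgraph on `A` and `B`: a wave whose matching `f` leaves the
man `h` of `X` single. -/
def IsHind (A : Set M) (B : Set W) (X : Set M) (h : M) (f : W → M) : Prop :=
  X ⊆ A ∧ h ∈ X ∧ InjOn f (Nbr E X ∩ B) ∧ ∀ w ∈ Nbr E X ∩ B, f w ∈ X ∧ f w ≠ h ∧ E (f w) w

/-- The subgraph on `A` and `B` has a hindrance. -/
def Hind (A : Set M) (B : Set W) : Prop := ∃ X h f, IsHind E A B X h f

variable {E}

lemma nbr_mono {X Y : Set M} (h : X ⊆ Y) : Nbr E X ⊆ Nbr E Y :=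
  fun _ ⟨x, hx, hw⟩ => ⟨x, h hx, hw⟩

lemma Hind.mono {A A' : Set M} {B : Set W} (h : Hind E A' B) (hA : A' ⊆ A) : Hind E A B := by
  obtain ⟨X, m, f, h1, h2⟩ := h
  exact ⟨X, m, f, h1.trans hA, h2⟩

lemma exists_least {ι : Type*} [LinearOrder ι] [WellFoundedLT ι] {p : ι → Prop} (h : ∃ i, p i) :
    ∃ i, p i ∧ ∀ j < i, ¬ p j := by
  refine ⟨wellFounded_lt.min {i | p i} h, wellFounded_lt.min_mem {i | p i} h, fun j hj hp => ?_⟩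
  exact wellFounded_lt.not_lt_min {i | p i} hp hj

/-- Any union of waves is a wave: well-order the waves and let each woman follow the first wave
that reaches her. -/
lemma wave_iUnion [Nonempty M] {ι : Type*} {A : Set M} {B : Set W} (X : ι → Set M)
    (hX : ∀ i, ∃ f, IsWave E A B (X i) f) : ∃ f, IsWave E A B (⋃ i, X i) f := by
  classical
  obtain ⟨_, _⟩ := exists_wellFoundedLT ι
  choose f hf using hX
  have key : ∀ w, ∃ y : M, (∃ i, w ∈ Nbr E (X i)) →
      ∃ i, w ∈ Nbr E (X i) ∧ (∀ j < i, w ∉ Nbr E (X j)) ∧ y = f i w := by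
    intro w
    by_cases h : ∃ i, w ∈ Nbr E (X i)
    · obtain ⟨i, hi, hl⟩ := exists_least h
      exact ⟨f i w, fun _ => ⟨i, hi, hl, rfl⟩⟩
    · exact ⟨Classical.arbitrary M, fun h' => (h h').elim⟩
  choose g hg using key
  have hN : ∀ w ∈ Nbr E (⋃ i, X i), ∃ i, w ∈ Nbr E (X i) := by
    rintro w ⟨x, hx, hw⟩
    obtain ⟨i, hi⟩ := mem_iUnion.1 hx
    exact ⟨i, x, hi, hw⟩
  refine ⟨g, iUnion_subset fun i => (hf i).1, ?_, ?_⟩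
  · rintro w ⟨hw, hwB⟩ w' ⟨hw', hwB'⟩ he
    obtain ⟨i, hi, hl, e⟩ := hg w (hN w hw)
    obtain ⟨j, hj, hl', e'⟩ := hg w' (hN w' hw')
    have a1 := (hf i).2.2 w ⟨hi, hwB⟩
    have a2 := (hf j).2.2 w' ⟨hj, hwB'⟩
    rw [e, e'] at he
    rcases lt_trichotomy i j with h | h | h
    · exact (hl' i h ⟨f i w, a1.1, he ▸ a2.2⟩).elim
    · subst h
      exact (hf i).2.1 ⟨hi, hwB⟩ ⟨hj, hwB'⟩ he
    · exact (hl j h ⟨f j w', a2.1, he ▸ a1.2⟩).elim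
  · rintro w ⟨hw, hwB⟩
    obtain ⟨i, hi, hl, e⟩ := hg w (hN w hw)
    have a1 := (hf i).2.2 w ⟨hi, hwB⟩
    rw [e]
    exact ⟨mem_iUnion.2 ⟨i, a1.1⟩, a1.2⟩

/-- Stages of the search from `h` along alternating paths: from a man to any neighbour in `U`,
then to her partner under `f`. -/
def stage (E : M → W → Prop) (f : W → M) (U : Set W) (h : M) : ℕ → Set M
  | 0 => {h}
  | n + 1 => stage E f U h n ∪ f '' (Nbr E (stage E f U h n) ∩ U)

/-- The men reachable from `h` along alternating paths whose women lie in `U`. -/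
def reach (E : M → W → Prop) (f : W → M) (U : Set W) (h : M) : Set M := ⋃ n, stage E f U h n

section Reach
variable {f : W → M} {U : Set W} {h : M}

lemma self_mem_reach : h ∈ reach E f U h := mem_iUnion.2 ⟨0, rfl⟩

lemma self_mem_stage (n : ℕ) : h ∈ stage E f U h n := by
  induction n with
  | zero => rfl
  | succ n ih => exact Or.inl ih

lemma reach_closed {w : W} (hw : w ∈ Nbr E (reach E f U h)) (hU : w ∈ U) :
    f w ∈ reach E f U h := by
  obtain ⟨x, hx, hxw⟩ := hw
  obtain ⟨n, hn⟩ := mem_iUnion.1 hx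
  exact mem_iUnion.2 ⟨n + 1, Or.inr ⟨w, ⟨⟨x, hn, hxw⟩, hU⟩, rfl⟩⟩

lemma reach_subset {X : Set M} (hh : h ∈ X) (hX : ∀ w ∈ Nbr E X, w ∈ U → f w ∈ X) :
    reach E f U h ⊆ X := by
  refine iUnion_subset fun n => ?_
  induction n with
  | zero => exact singleton_subset_iff.2 hh
  | succ n ih =>
    refine union_subset ih ?_
    rintro _ ⟨w, ⟨hw, hU⟩, rfl⟩
    exact hX w (nbr_mono ih hw) hU

lemma reach_eq {x : M} (hx : x ∈ reach E f U h) (hne : x ≠ h) :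
    ∃ w ∈ Nbr E (reach E f U h), w ∈ U ∧ f w = x := by
  have : reach E f U h ⊆
      insert h {x ∈ reach E f U h | ∃ w ∈ Nbr E (reach E f U h), w ∈ U ∧ f w = x} := by
    refine reach_subset (mem_insert _ _) ?_
    rintro w hw hU
    have hw' : w ∈ Nbr E (reach E f U h) := by
      refine nbr_mono ?_ hw
      exact insert_subset self_mem_reach (sep_subset _ _)
    exact Or.inr ⟨reach_closed hw' hU, w, hw', hU, rfl⟩
  rcases this hx with h1 | h1
  · exact (hne h1).elim
  · exact h1.2

/-- Switching along an alternating path frees `x`: finitely many women `Q` can be rematched so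
that `x` becomes single instead of `h`. -/
lemma stage_switch (n : ℕ) : ∀ x ∈ stage E f U h n, ∃ Q : Set W, Q.Finite ∧
    Q ⊆ U ∩ Nbr E (reach E f U h) ∧ f '' Q ⊆ stage E f U h n ∧ x ∈ insert h (f '' Q) ∧
    ∃ g : W → M, InjOn g Q ∧ ∀ w ∈ Q, E (g w) w ∧ g w ∈ insert h (f '' Q) ∧ g w ≠ x := by
  classical
  induction n with
  | zero =>
    rintro x rfl
    exact ⟨∅, finite_empty, empty_subset _, by simp, by simp, f, by simp, by simp⟩
  | succ n ih =>
    intro x hx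
    by_cases hxn : x ∈ stage E f U h n
    · obtain ⟨Q, h1, h2, h3, h4⟩ := ih x hxn
      exact ⟨Q, h1, h2, h3.trans subset_union_left, h4⟩
    rcases hx with hx | ⟨w, ⟨⟨y, hy, hyw⟩, hwU⟩, rfl⟩
    · exact (hxn hx).elim
    obtain ⟨Q, h1, h2, h3, h4, g, g1, g2⟩ := ih y hy
    have hwQ : w ∉ Q := fun hw => hxn (h3 ⟨w, hw, rfl⟩)
    have hins : insert h (f '' Q) ⊆ stage E f U h n :=
      insert_subset (self_mem_stage n) h3
    have hins2 : insert h (f '' Q) ⊆ insert h (f '' insert w Q) :=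
      insert_subset_insert (image_mono (subset_insert _ _))
    refine ⟨insert w Q, h1.insert w, insert_subset ⟨hwU, y, mem_iUnion.2 ⟨n, hy⟩, hyw⟩ h2, ?_, ?_,
      Function.update g w y, ?_, ?_⟩
    · rintro _ ⟨v, rfl | hv, rfl⟩
      · exact Or.inr ⟨v, ⟨⟨y, hy, hyw⟩, hwU⟩, rfl⟩
      · exact Or.inl (h3 ⟨v, hv, rfl⟩)
    · exact Or.inr ⟨w, mem_insert _ _, rfl⟩
    · have hne : ∀ v ∈ Q, Function.update g w y v = g v := fun v hv =>
        Function.update_of_ne (ne_of_mem_of_not_mem hv hwQ) _ _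
      rintro v (rfl | hv) v' (rfl | hv') he
      · rfl
      · rw [Function.update_self, hne _ hv'] at he
        exact ((g2 _ hv').2.2 he.symm).elim
      · rw [Function.update_self, hne _ hv] at he
        exact ((g2 _ hv).2.2 he).elim
      · rw [hne _ hv, hne _ hv'] at he
        exact g1 hv hv' he
    · rintro v (rfl | hv)
      · rw [Function.update_self]
        exact ⟨hyw, hins2 h4, fun e => hxn (e ▸ hy)⟩
      · rw [Function.update_of_ne (ne_of_mem_of_not_mem hv hwQ)]
        exact ⟨(g2 v hv).1, hins2 (g2 v hv).2.1, fun e => hxn (e ▸ hins (g2 v hv).2.1)⟩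

/-- A woman `t` outside `U` adjacent to the reachable set can be matched into it, at the price of
rematching finitely many women of `U`; the men used are the old partners and `h`. -/
lemma reach_switch {t : W} (ht : t ∈ Nbr E (reach E f U h)) (htU : t ∉ U) :
    ∃ Q : Set W, Q.Finite ∧ Q ⊆ U ∩ Nbr E (reach E f U h) ∧
    ∃ g : W → M, InjOn g (insert t Q) ∧
      ∀ w ∈ insert t Q, E (g w) w ∧ g w ∈ insert h (f '' Q) := by
  classical
  obtain ⟨x, hx, hxt⟩ := ht
  obtain ⟨n, hn⟩ := mem_iUnion.1 hx
  obtain ⟨Q, h1, h2, h3, h4, g, g1, g2⟩ := stage_switch n x hn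
  have htQ : t ∉ Q := fun hw => htU (h2 hw).1
  have hne : ∀ v ∈ Q, Function.update g t x v = g v := fun v hv =>
    Function.update_of_ne (ne_of_mem_of_not_mem hv htQ) _ _
  refine ⟨Q, h1, h2, Function.update g t x, ?_, ?_⟩
  · rintro v (rfl | hv) v' (rfl | hv') he
    · rfl
    · rw [Function.update_self, hne _ hv'] at he
      exact ((g2 _ hv').2.2 he.symm).elim
    · rw [Function.update_self, hne _ hv] at he
      exact ((g2 _ hv).2.2 he).elim
    · rw [hne _ hv, hne _ hv'] at he
      exact g1 hv hv' he
  · rintro v (rfl | hv)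
    · rw [Function.update_self]
      exact ⟨hxt, h4⟩
    · rw [hne _ hv]
      exact ⟨(g2 v hv).1, (g2 v hv).2.1⟩

end Reach

/-- A hindrance can be shrunk to one in which every man other than `h` is matched. -/
lemma Hind.exists_surj {A : Set M} {B : Set W} (hi : Hind E A B) :
    ∃ X h f, IsHind E A B X h f ∧ ∀ x ∈ X, x ≠ h → ∃ w ∈ Nbr E X ∩ B, f w = x := by
  obtain ⟨X, h, f, hXA, hh, hinj, hf⟩ := hi
  have hsub : reach E f B h ⊆ X := reach_subset hh fun w hw hB => (hf w ⟨hw, hB⟩).1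
  refine ⟨reach E f B h, h, f, ⟨hsub.trans hXA, self_mem_reach,
    hinj.mono (inter_subset_inter_left _ (nbr_mono hsub)), ?_⟩, ?_⟩
  · rintro w ⟨hw, hB⟩
    exact ⟨reach_closed hw hB, (hf w ⟨nbr_mono hsub hw, hB⟩).2⟩
  · intro x hx hne
    obtain ⟨w, h1, h2, h3⟩ := reach_eq hx hne
    exact ⟨w, ⟨h1, h2⟩, h3⟩

/-- In an unhindered graph any single man can be married off so that the rest stays
unhindered. -/
lemma single_step {A : Set M} {B : Set W} (hu : ¬ Hind E A B) {m : M} (hm : m ∈ A) :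
    ∃ w ∈ B, E m w ∧ ¬ Hind E (A \ {m}) (B \ {w}) := by
  classical
  have : Nonempty M := ⟨m⟩
  by_contra! hcon
  -- every neighbour `w` of `m` lies in the neighbourhood of a wave that avoids `m`
  have key : ∀ w : {w // w ∈ B ∧ E m w}, ∃ X : Set M, m ∉ X ∧ w.1 ∈ Nbr E X ∧
      ∃ f, IsWave E A B X f := by
    rintro ⟨w, hwB, hmw⟩
    obtain ⟨X, h, f, hXA, hh, hinj, hf⟩ := hcon w hwB hmw
    set U := B \ {w}
    have hsub : reach E f U h ⊆ X := reach_subset hh fun w hw hB => (hf w ⟨hw, hB⟩).1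
    have hinj' : InjOn f (Nbr E (reach E f U h) ∩ U) :=
      hinj.mono (inter_subset_inter_left _ (nbr_mono hsub))
    have hRA : reach E f U h ⊆ A := (hsub.trans hXA).trans sdiff_subset
    have hwN : w ∈ Nbr E (reach E f U h) := by
      by_contra hwN
      have hBU : ∀ v ∈ Nbr E (reach E f U h) ∩ B, v ∈ Nbr E (reach E f U h) ∩ U :=
        fun v hv => ⟨hv.1, hv.2, fun e => hwN (by rw [mem_singleton_iff] at e; exact e ▸ hv.1)⟩
      refine hu ⟨reach E f U h, h, f, hRA, self_mem_reach, hinj'.mono hBU, fun v hv => ?_⟩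
      have hv' := hBU v hv
      exact ⟨reach_closed hv'.1 hv'.2, (hf v ⟨nbr_mono hsub hv'.1, hv'.2⟩).2⟩
    refine ⟨reach E f U h, fun hmR => (hXA (hsub hmR)).2 rfl, hwN, ?_⟩
    have hwU : w ∉ U := fun hw => hw.2 rfl
    obtain ⟨Q, -, hQ, g, g1, g2⟩ := reach_switch hwN hwU
    have hR' : insert h (f '' Q) ⊆ reach E f U h := by
      refine insert_subset self_mem_reach ?_
      rintro _ ⟨v, hv, rfl⟩
      exact reach_closed (hQ hv).2 (hQ hv).1
    have hout : ∀ v ∈ Nbr E (reach E f U h) ∩ B, v ∉ insert w Q →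
        v ∈ Nbr E (reach E f U h) ∩ U ∧ f v ∉ insert h (f '' Q) := by
      intro v hv hvQ
      have hvU : v ∈ U := ⟨hv.2, fun e => hvQ (Or.inl e)⟩
      refine ⟨⟨hv.1, hvU⟩, ?_⟩
      rintro (e | ⟨q, hq, e⟩)
      · exact (hf v ⟨nbr_mono hsub hv.1, hvU⟩).2.1 e
      · have := hinj' ⟨(hQ hq).2, (hQ hq).1⟩ ⟨hv.1, hvU⟩ e
        exact hvQ (Or.inr (this ▸ hq))
    refine ⟨fun v => if v ∈ insert w Q then g v else f v, hRA, ?_, ?_⟩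
    · intro v hv v' hv' he
      dsimp only at he
      split_ifs at he with c1 c2 c2
      · exact g1 c1 c2 he
      · exact ((hout v' hv' c2).2 (he ▸ (g2 v c1).2)).elim
      · exact ((hout v hv c1).2 (he ▸ (g2 v' c2).2)).elim
      · exact hinj' (hout v hv c1).1 (hout v' hv' c2).1 he
    · intro v hv
      dsimp only
      split_ifs with c
      · exact ⟨hR' (g2 v c).2, (g2 v c).1⟩
      · have := (hout v hv c).1
        exact ⟨reach_closed this.1 this.2, (hf v ⟨nbr_mono hsub this.1, this.2⟩).2.2⟩
  choose X hX1 hX2 hX3 using key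
  obtain ⟨f, f1, f2, f3⟩ := wave_iUnion X hX3
  have hmX : m ∉ ⋃ i, X i := fun h => by
    obtain ⟨i, hi⟩ := mem_iUnion.1 h
    exact hX1 i hi
  have hN : ∀ w ∈ Nbr E (insert m (⋃ i, X i)) ∩ B, w ∈ Nbr E (⋃ i, X i) ∩ B := by
    rintro w ⟨⟨x, rfl | hx, hxw⟩, hwB⟩
    · exact ⟨nbr_mono (subset_iUnion X ⟨w, hwB, hxw⟩) (hX2 ⟨w, hwB, hxw⟩), hwB⟩
    · exact ⟨⟨x, hx, hxw⟩, hwB⟩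
  refine hu ⟨insert m (⋃ i, X i), m, f, insert_subset hm f1, mem_insert _ _, f2.mono hN, ?_⟩
  intro w hw
  have := f3 w (hN w hw)
  exact ⟨Or.inr this.1, fun e => hmX (e ▸ this.1), this.2⟩

/-- A state in the process of marrying off the men of `A` into `B`: the men in `P` have been
matched by `g` into `Y`, and the rest of the graph is unhindered. -/
def State (E : M → W → Prop) (A : Set M) (B : Set W) (P : Set M) (Y : Set W) (g : M → W) : Prop :=
  P ⊆ A ∧ Y ⊆ B ∧ IsMatching E P Y g ∧ ¬ Hind E (A \ P) (B \ Y)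

lemma single_state [Nonempty W] {A : Set M} {B : Set W} (hu : ¬ Hind E A B) {Z : Set M}
    (hZ : Z.Finite) (hZA : Z ⊆ A) : ∃ P Y g, State E A B P Y g ∧ Z ⊆ P := by
  classical
  induction Z, hZ using Set.Finite.induction_on with
  | empty =>
    exact ⟨∅, ∅, fun _ => Classical.arbitrary W, ⟨empty_subset _, empty_subset _,
      ⟨by simp, by simp⟩, by simpa using hu⟩, empty_subset _⟩
  | @insert m Z _ _ ih =>
    obtain ⟨P, Y, g, ⟨s1, s2, ⟨s3, s4⟩, s5⟩, hZP⟩ := ih ((subset_insert _ _).trans hZA)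
    by_cases hmP : m ∈ P
    · exact ⟨P, Y, g, ⟨s1, s2, ⟨s3, s4⟩, s5⟩, insert_subset hmP hZP⟩
    have hmA : m ∈ A := hZA (mem_insert _ _)
    obtain ⟨w, hw, hmw, hu'⟩ := single_step s5 ⟨hmA, hmP⟩
    have hne : ∀ v ∈ P, Function.update g m w v = g v := fun v hv =>
      Function.update_of_ne (ne_of_mem_of_not_mem hv hmP) _ _
    refine ⟨insert m P, insert w Y, Function.update g m w, ⟨insert_subset hmA s1,
      insert_subset hw.1 s2, ⟨?_, ?_⟩, ?_⟩, insert_subset_insert hZP⟩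
    · rintro v (rfl | hv) v' (rfl | hv') he
      · rfl
      · rw [Function.update_self, hne _ hv'] at he
        exact (hw.2 (he ▸ (s4 _ hv').1)).elim
      · rw [Function.update_self, hne _ hv] at he
        exact (hw.2 (he ▸ (s4 _ hv).1)).elim
      · rw [hne _ hv, hne _ hv'] at he
        exact s3 hv hv' he
    · rintro v (rfl | hv)
      · rw [Function.update_self]
        exact ⟨mem_insert _ _, hmw⟩
      · rw [hne _ hv]
        exact ⟨Or.inr (s4 v hv).1, (s4 v hv).2⟩
    · rwa [sdiff_sdiff, sdiff_sdiff, union_singleton, union_singleton] at hu'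

end Basic

/-! ### Parallel rows of partial marriages -/

section Row
variable {M W : Type u} {E : M → W → Prop}

open Classical in
lemma State.extend {A : Set M} {B : Set W} {P P' : Set M} {Y Y' : Set W} {g g' : M → W}
    (s : State E A B P Y g) (s' : State E (A \ P) (B \ Y) P' Y' g') :
    State E A B (P ∪ P') (Y ∪ Y') (fun m => if m ∈ P then g m else g' m) := by
  obtain ⟨s1, s2, ⟨s3, s4⟩, s5⟩ := s
  obtain ⟨t1, t2, ⟨t3, t4⟩, t5⟩ := s'
  refine ⟨union_subset s1 (t1.trans sdiff_subset), union_subset s2 (t2.trans sdiff_subset),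
    ⟨?_, ?_⟩, ?_⟩
  · intro m hm m' hm' he
    dsimp only at he
    split_ifs at he with c c' c'
    · exact s3 c c' he
    · exact ((t2 (t4 m' (hm'.resolve_left c')).1).2 (he ▸ (s4 m c).1)).elim
    · exact ((t2 (t4 m (hm.resolve_left c)).1).2 (he ▸ (s4 m' c').1)).elim
    · exact t3 (hm.resolve_left c) (hm'.resolve_left c') he
  · intro m hm
    dsimp only
    split_ifs with c
    · exact ⟨Or.inl (s4 m c).1, (s4 m c).2⟩
    · have := t4 m (hm.resolve_left c)
      exact ⟨Or.inr this.1, this.2⟩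
  · rwa [sdiff_sdiff, sdiff_sdiff] at t5

/-- If small sets of each kind `i` can be married off with an unhindered rest, and the men left
single by `φ` are exhausted by small sets, then everybody can be married. For each `i` a chain of
states is built, all rows in parallel; the set `Zᵢ` of men dealt with by row `i` is closed under
the map taking a wife in row `i` to her husband in any other row and under `φ`. -/
lemma row [Nonempty W] {I : Type*} [LinearOrder I] [WellFoundedLT I] (small : I → Set M → Prop)
    (h_mono : ∀ i S T, small i S → T ⊆ S → small i T)
    (h_union : ∀ i S T, small i S → small i T → small i (S ∪ T))
    (h_iUnion : ∀ i (S : I → Set M), (∀ k, small i (S k)) → small i (⋃ k, S k))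
    (h_image : ∀ i S (r : M → M → Prop), small i S → (∀ x y y', r x y → r x y' → y = y') →
      small i {y | ∃ x ∈ S, r x y})
    (hext : ∀ i (A : Set M) (B : Set W), ¬ Hind E A B → ∀ Z ⊆ A, small i Z →
      ∃ P Y g, State E A B P Y g ∧ Z ⊆ P)
    {A : Set M} {B : Set W} (hu : ¬ Hind E A B) {H : Set M} {φ : M → W}
    (hφ : IsMatching E (A \ H) B φ) (Hn : I → ℕ → Set M) (hHn : ∀ i n, small i (Hn i n))
    (hH : ∀ m ∈ H, ∃ i n, m ∈ Hn i n) :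
    ∃ g, IsMatching E A B g := by
  classical
  let St := {p : Set M × Set W × (M → W) // State E A B p.1 p.2.1 p.2.2}
  have key : ∀ (s : St) (i : I) (Z : Set M), ∃ s' : St, s.1.1 ⊆ s'.1.1 ∧
      (∀ m ∈ s.1.1, s'.1.2.2 m = s.1.2.2 m) ∧ (small i Z → Z ⊆ A → Z ⊆ s'.1.1) := by
    rintro ⟨⟨P, Y, g⟩, s⟩ i Z
    by_cases hZ : small i Z ∧ Z ⊆ A
    swap
    · exact ⟨⟨⟨P, Y, g⟩, s⟩, subset_rfl, fun _ _ => rfl, fun h1 h2 => (hZ ⟨h1, h2⟩).elim⟩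
    obtain ⟨P', Y', g', s', hs'⟩ := hext i (A \ P) (B \ Y) s.2.2.2 (Z \ P)
      (sdiff_subset_sdiff_left hZ.2) (h_mono _ _ _ hZ.1 sdiff_subset)
    refine ⟨⟨⟨_, _, _⟩, s.extend s'⟩, subset_union_left, ?_, ?_⟩
    · intro m hm
      exact if_pos hm
    · intro _ _ m hm
      by_cases hP : m ∈ P
      · exact Or.inl hP
      · exact Or.inr (hs' ⟨hm, hP⟩)
  choose ext e1 e2 e3 using key
  let s0 : St := ⟨⟨∅, ∅, fun _ => Classical.arbitrary W⟩, empty_subset _, empty_subset _,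
      ⟨by simp, by simp⟩, by simpa using hu⟩
  let Zn : ℕ → (I → St × Set M) → I → Set M := fun n x j =>
    ((x j).2 ∪ (Hn j n ∩ A)) ∪
      ({m | ∃ z ∈ (x j).2, m ∈ A \ H ∧ φ m = (x j).1.1.2.2 z} ∪
        ⋃ i, {m | ∃ z ∈ (x j).2, m ∈ (x i).1.1.1 ∧ (x i).1.1.2.2 m = (x j).1.1.2.2 z})
  let seq : ℕ → I → St × Set M := fun n => Nat.rec (fun _ => (s0, ∅))
    (fun n x j => (ext (x j).1 j (Zn n x j), Zn n x j)) n
  have seq_succ : ∀ n j, seq (n + 1) j = (ext (seq n j).1 j (Zn n (seq n) j), Zn n (seq n) j) :=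
    fun _ _ => rfl
  let Z : ℕ → I → Set M := fun n i => (seq n i).2
  let P : ℕ → I → Set M := fun n i => (seq n i).1.1.1
  let G : ℕ → I → M → W := fun n i => (seq n i).1.1.2.2
  have hst : ∀ n i, State E A B (P n i) (seq n i).1.1.2.1 (G n i) := fun n i => (seq n i).1.2
  have hZsucc : ∀ n j, Z (n + 1) j = (Z n j ∪ (Hn j n ∩ A)) ∪
      ({m | ∃ z ∈ Z n j, m ∈ A \ H ∧ φ m = G n j z} ∪
        ⋃ i, {m | ∃ z ∈ Z n j, m ∈ P n i ∧ G n i m = G n j z}) := fun n j => rfl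
  have inv : ∀ n j, small j (Z n j) ∧ Z n j ⊆ P n j := by
    intro n
    induction n with
    | zero => exact fun j => ⟨h_mono j _ _ (hHn j 0) (empty_subset _), empty_subset _⟩
    | succ n ih =>
      intro j
      have h1 : small j (Z (n + 1) j) := by
        rw [hZsucc]
        refine h_union _ _ _ (h_union _ _ _ (ih j).1 (h_mono _ _ _ (hHn j n) inter_subset_left))
          (h_union _ _ _ (h_image _ _ _ (ih j).1 ?_)
            (h_iUnion _ _ fun i => h_image _ _ _ (ih j).1 ?_))
        · rintro x y y' ⟨hy, ey⟩ ⟨hy', ey'⟩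
          exact hφ.1 hy hy' (ey.trans ey'.symm)
        · rintro x y y' ⟨hy, ey⟩ ⟨hy', ey'⟩
          exact (hst n i).2.2.1.1 hy hy' (ey.trans ey'.symm)
      refine ⟨h1, e3 _ _ _ h1 ?_⟩
      rw [hZsucc]
      refine union_subset (union_subset ((ih j).2.trans (hst n j).1) inter_subset_right)
        (union_subset ?_ (iUnion_subset fun i => ?_))
      · rintro m ⟨z, hz, hm, -⟩
        exact hm.1
      · rintro m ⟨z, hz, hm, -⟩
        exact (hst n i).1 hm
  have Zmono : ∀ i, Monotone (fun n => Z n i) := fun i => monotone_nat_of_le_succ fun n => by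
    change Z n i ⊆ Z (n + 1) i
    rw [hZsucc]
    exact subset_union_left.trans subset_union_left
  have Pmono : ∀ i, Monotone (fun n => P n i) := fun i => monotone_nat_of_le_succ fun n =>
    e1 _ _ _
  have Gagree : ∀ i n k m, m ∈ P n i → G (n + k) i m = G n i m := by
    intro i n k m hm
    induction k with
    | zero => rfl
    | succ k ih =>
      rw [← ih]
      exact e2 _ _ _ m (Pmono i (Nat.le_add_right n k) hm)
  -- a man dealt with by some row marries as in the first such row, any other man by `φ`
  have key2 : ∀ m, ∃ w : W, ((∃ i n, m ∈ Z n i) → ∃ i, (∀ j < i, ¬ ∃ n, m ∈ Z n j) ∧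
      ∃ n, ∀ k ≥ n, m ∈ Z k i ∧ w = G k i m) ∧ ((¬ ∃ i n, m ∈ Z n i) → w = φ m) := by
    intro m
    by_cases h : ∃ i n, m ∈ Z n i
    · obtain ⟨i, ⟨n, hn⟩, hl⟩ := exists_least h
      refine ⟨G n i m, fun _ => ⟨i, hl, n, fun k hk => ⟨Zmono i hk hn, ?_⟩⟩, fun h' => (h' h).elim⟩
      obtain ⟨d, rfl⟩ := Nat.exists_eq_add_of_le hk
      exact (Gagree i n d m ((inv n i).2 hn)).symm
    · exact ⟨φ m, fun h' => (h h').elim, fun _ => rfl⟩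
  choose g hg1 hg2 using key2
  have notH : ∀ m ∈ A, (¬ ∃ i n, m ∈ Z n i) → m ∈ A \ H := by
    refine fun m hm hZ => ⟨hm, fun hmH => hZ ?_⟩
    obtain ⟨i, n, hn⟩ := hH m hmH
    refine ⟨i, n + 1, ?_⟩
    rw [hZsucc]
    exact Or.inl (Or.inr ⟨hn, hm⟩)
  have cross : ∀ m m', (∃ i n, m ∈ Z n i) → m' ∈ A → (¬ ∃ i n, m' ∈ Z n i) → g m ≠ g m' := by
    intro m m' h hm' h' he
    obtain ⟨i, hl, n, hn⟩ := hg1 m h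
    rw [hg2 m' h', (hn n le_rfl).2] at he
    refine h' ⟨i, n + 1, ?_⟩
    rw [hZsucc]
    exact Or.inr (Or.inl ⟨m, (hn n le_rfl).1, notH m' hm' h', he.symm⟩)
  have cross2 : ∀ m m' i j n n', (∀ k ≥ n, m ∈ Z k i ∧ g m = G k i m) →
      (∀ k ≥ n', m' ∈ Z k j ∧ g m' = G k j m') → g m = g m' → ∃ n, m ∈ Z n j := by
    intro m m' i j n n' hn hn' he
    have h1 := hn (max n n') (le_max_left _ _)
    have h2 := hn' (max n n') (le_max_right _ _)
    refine ⟨max n n' + 1, ?_⟩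
    rw [hZsucc]
    refine Or.inr (Or.inr (mem_iUnion.2 ⟨i, m', h2.1, (inv _ i).2 h1.1, ?_⟩))
    rw [← h1.2, ← h2.2, he]
  refine ⟨g, ?_, ?_⟩
  · intro m hm m' hm' he
    by_cases h : ∃ i n, m ∈ Z n i <;> by_cases h' : ∃ i n, m' ∈ Z n i
    · obtain ⟨i, hl, n, hn⟩ := hg1 m h
      obtain ⟨j, hl', n', hn'⟩ := hg1 m' h'
      rcases lt_trichotomy i j with hij | hij | hij
      · exact (hl' i hij (cross2 m' m j i n' n hn' hn he.symm)).elim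
      · subst hij
        have h1 := hn (max n n') (le_max_left _ _)
        have h2 := hn' (max n n') (le_max_right _ _)
        refine (hst (max n n') i).2.2.1.1 ((inv _ i).2 h1.1) ((inv _ i).2 h2.1) ?_
        rw [← h1.2, ← h2.2, he]
      · exact (hl j hij (cross2 m m' i j n n' hn hn' he)).elim
    · exact (cross m m' h hm' h' he).elim
    · exact (cross m' m h' hm h he.symm).elim
    · rw [hg2 m h, hg2 m' h'] at he
      exact hφ.1 (notH m hm h) (notH m' hm' h') he
  · intro m hm
    by_cases h : ∃ i n, m ∈ Z n i
    · obtain ⟨i, hl, n, hn⟩ := hg1 m h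
      obtain ⟨h1, h2⟩ := hn n le_rfl
      rw [h2]
      have := (hst n i).2.2.1.2 m ((inv _ i).2 h1)
      exact ⟨(hst n i).2.1 this.1, this.2⟩
    · rw [hg2 m h]
      exact hφ.2 m (notH m hm h)

end Row

/-! ### Countable and singular cardinals -/

section Cardinals
open Cardinal
variable {M W : Type u} (E : M → W → Prop)

/-- In an unhindered graph, a matching that misses at most `κ` men can be replaced by one that
misses nobody. -/
def QProp (κ : Cardinal.{u}) : Prop := ∀ (A : Set M) (B : Set W) (H : Set M) (φ : M → W),
  ¬ Hind E A B → #H ≤ κ → IsMatching E (A \ H) B φ → ∃ g, IsMatching E A B g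

/-- In an unhindered graph, any `κ` men can be married off, together with further men if need be,
so that the rest stays unhindered. -/
def SProp (κ : Cardinal.{u}) : Prop := ∀ (A : Set M) (B : Set W), ¬ Hind E A B → ∀ Z ⊆ A,
  #Z ≤ κ → ∃ P Y g, State E A B P Y g ∧ Z ⊆ P

variable {E}

lemma mk_rel_image_le {S : Set M} {r : M → M → Prop} (hr : ∀ x y y', r x y → r x y' → y = y') :
    #{y | ∃ x ∈ S, r x y} ≤ #S := by
  have h : ∀ y : {y | ∃ x ∈ S, r x y}, ∃ x : S, r x y := fun ⟨y, x, hx, hxy⟩ => ⟨⟨x, hx⟩, hxy⟩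
  choose f hf using h
  refine mk_le_of_injective (f := f) fun y y' he => Subtype.ext (hr _ _ _ (hf y) ?_)
  rw [he]
  exact hf y'

lemma QProp_aleph0 [Nonempty W] : QProp E ℵ₀ := by
  intro A B H φ hu hH hφ
  rcases H.eq_empty_or_nonempty with rfl | hne
  · exact ⟨φ, by simpa using hφ⟩
  obtain ⟨e, he⟩ := (le_aleph0_iff_set_countable.1 hH).exists_eq_range hne
  refine row (I := Unit) (fun _ S => S.Finite) (fun _ S T hS hT => hS.subset hT)
    (fun _ S T hS hT => hS.union hT) (fun _ S hS => finite_iUnion hS) ?_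
    (fun _ A B hu Z hZ hf => single_state hu hf hZ) hu hφ (fun _ n => {e n})
    (fun _ _ => finite_singleton _) ?_
  · intro _ S r hS hr
    rw [← lt_aleph0_iff_set_finite] at hS ⊢
    exact (mk_rel_image_le hr).trans_lt hS
  · intro m hm
    rw [he] at hm
    obtain ⟨n, rfl⟩ := hm
    exact ⟨(), n, rfl⟩

/-- Row `s`, for `s` in a cofinal set of size less than `κ`, deals with the men whose
index is at most `s`. -/
lemma QProp_singular [Nonempty W] {κ : Cardinal.{u}} (hκ : κ.IsSingular)
    (hS : ∀ c, ℵ₀ ≤ c → c < κ → SProp E c) (hκ0 : ℵ₀ < κ) : QProp E κ := by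
  intro A B H φ hu hH hφ
  obtain ⟨S, hcof, hcard⟩ := Order.exists_cof_eq κ.ord.ToType
  rw [Ordinal.cof_toType] at hcard
  have hSκ : #S < κ := hcard ▸ hκ.cof_ord_lt
  have hemb : #H ≤ #κ.ord.ToType := by rwa [mk_ord_toType]
  obtain ⟨e⟩ := hemb
  let Hs : S → Set M := fun s => {m | ∃ h : m ∈ H, e ⟨m, h⟩ ≤ s}
  have hHs : ∀ s, #(Hs s) < κ := by
    intro s
    have h1 : #(Iic s.1) < κ := by
      have := mk_Iio_lt s.1 (by simp)
      rw [mk_ord_toType] at this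
      have h2 : #(Iic s.1) ≤ #(Iio s.1) + 1 := by
        rw [← Iio_insert]
        exact mk_insert_le
      exact h2.trans_lt (add_lt_of_lt hκ0.le this (one_lt_aleph0.trans hκ0))
    refine lt_of_le_of_lt ?_ h1
    refine mk_le_of_injective (f := fun m : Hs s => (⟨e ⟨m.1, m.2.1⟩, m.2.2⟩ : Iic s.1)) ?_
    intro m m' he
    have := e.injective (Subtype.ext_iff.1 he)
    exact Subtype.ext (Subtype.mk.inj this)
  let c : S → Cardinal.{u} := fun s => max (max #(Hs s) #S) ℵ₀
  have c0 : ∀ s, ℵ₀ ≤ c s := fun s => le_max_right _ _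
  refine row (I := S) (fun s Z => #Z ≤ c s) (fun _ S T hS hT => (mk_le_mk_of_subset hT).trans hS)
    (fun s S T hS hT => (mk_union_le _ _).trans (add_le_of_le (c0 s) hS hT)) ?_
    (fun s S r hS hr => (mk_rel_image_le hr).trans hS)
    (fun s A B hu Z hZ hf => hS (c s) (c0 s) (max_lt (max_lt (hHs s) hSκ) hκ0) A B hu Z hZ hf) hu hφ
    (fun s _ => Hs s) (fun s _ => (le_max_left _ _).trans (le_max_left _ _)) ?_
  · intro s T hT
    refine (mk_iUnion_le T).trans (mul_le_of_le (c0 s) ?_ ?_)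
    · exact (le_max_right _ _).trans (le_max_left _ _)
    · exact ciSup_le' hT
  · intro m hm
    obtain ⟨s, hs, hle⟩ := hcof (e ⟨m, hm⟩)
    exact ⟨⟨s, hs⟩, 0, hm, hle⟩

end Cardinals

/-! ### Regular cardinals, clubs and stationary sets -/

section Index
open Cardinal

/-- The properties used of the initial ordinal of a regular uncountable cardinal. -/
structure Idx (ι : Type u) [LinearOrder ι] : Prop where
  wf : WellFoundedLT ι
  reg : (#ι).IsRegular
  unc : ℵ₀ < #ι
  iio : ∀ a : ι, #(Iio a) < #ι
  bdd : ∀ S : Set ι, #S < #ι → ∃ b, ∀ s ∈ S, s < b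

lemma exists_idx {κ : Cardinal.{u}} (hκ : κ.IsRegular) (hunc : ℵ₀ < κ) :
    Idx κ.ord.ToType := by
  refine ⟨inferInstance, by rwa [mk_ord_toType], by rwa [mk_ord_toType],
    fun a => mk_Iio_lt a (by simp), fun S hS => ?_⟩
  by_contra! hcon
  have hcof : IsCofinal S := hcon
  have := Order.cof_le hcof
  rw [Ordinal.cof_toType, hκ.cof_ord] at this
  rw [mk_ord_toType] at hS
  exact (this.trans_lt hS).false

/-- A set of cardinality below that of the index type `ι`. -/
def Small (ι : Type u) {α : Type u} (S : Set α) : Prop := #S < #ι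

variable {ι α β : Type u}

lemma Small.mono {S T : Set α} (hS : Small ι S) (h : T ⊆ S) : Small ι T :=
  (mk_le_mk_of_subset h).trans_lt hS

lemma Small.image {S : Set α} (hS : Small ι S) (f : α → β) : Small ι (f '' S) :=
  mk_image_le.trans_lt hS

variable [LinearOrder ι]

lemma Idx.small_finite (hι : Idx ι) {S : Set α} (hS : S.Finite) : Small ι S :=
  (lt_aleph0_iff_set_finite.2 hS).trans hι.unc

lemma Idx.small_union (hι : Idx ι) {S T : Set α} (hS : Small ι S) (hT : Small ι T) :
    Small ι (S ∪ T) :=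
  (mk_union_le _ _).trans_lt (add_lt_of_lt hι.reg.aleph0_le hS hT)

lemma Idx.small_biUnion (hι : Idx ι) {S : Set α} {T : α → Set β} (hS : Small ι S)
    (hT : ∀ a ∈ S, Small ι (T a)) : Small ι {b | ∃ a ∈ S, b ∈ T a} := by
  have := (card_biUnion_lt_iff_forall_of_isRegular (t := fun a _ => T a) hι.reg hS).2 hT
  refine Small.mono (S := ⋃ a, ⋃ (_ : a ∈ S), T a) this ?_
  rintro b ⟨a, ha, hb⟩
  exact mem_iUnion₂.2 ⟨a, ha, hb⟩

lemma Idx.small_iic (hι : Idx ι) (a : ι) : Small ι (Iic a) := by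
  rw [← Iio_insert, insert_eq]
  exact hι.small_union (hι.small_finite (finite_singleton _)) (hι.iio a)

lemma Idx.small_countable (hι : Idx ι) {S : Set α} (hS : S.Countable) : Small ι S :=
  (le_aleph0_iff_set_countable.2 hS).trans_lt hι.unc

/-- The points closed under `F`; as `F` varies these sets form a base of the club filter. -/
def Cl (F : ι → ι) : Set ι := {a | ∀ ξ < a, F ξ < a}

/-- Stationary sets, expressed through closure points of functions. -/
def Stat (Φ : Set ι) : Prop := ∀ F : ι → ι, ∃ a ∈ Φ, a ∈ Cl F

lemma Idx.cl_unbdd (hι : Idx ι) (F : ι → ι) (a : ι) : ∃ c ∈ Cl F, a < c := by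
  have := hι.wf
  have key : ∀ x : ι, ∃ y, x < y ∧ ∀ ξ ≤ x, F ξ < y := by
    intro x
    obtain ⟨b, hb⟩ := hι.bdd (insert x (F '' Iic x))
      (by rw [insert_eq]; exact hι.small_union (hι.small_finite (finite_singleton _))
            ((hι.small_iic x).image F))
    exact ⟨b, hb x (mem_insert _ _), fun ξ hξ => hb _ (Or.inr ⟨ξ, hξ, rfl⟩)⟩
  choose nx n1 n2 using key
  let x : ℕ → ι := fun n => Nat.rec a (fun _ y => nx y) n
  have hx : ∀ n, x (n + 1) = nx (x n) := fun _ => rfl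
  obtain ⟨b, hb⟩ := hι.bdd (range x) (hι.small_countable (countable_range x))
  obtain ⟨c, hc, hl⟩ := exists_least (p := fun b => ∀ n, x n < b) ⟨b, fun n => hb _ ⟨n, rfl⟩⟩
  refine ⟨c, fun ξ hξ => ?_, hc 0⟩
  have := hl ξ hξ
  push Not at this
  obtain ⟨n, hn⟩ := this
  exact (n2 (x n) ξ hn).trans (hc (n + 1))

lemma cl_closed {F : ι → ι} {a : ι} (h : ∀ ξ < a, ∃ c ∈ Cl F, ξ < c ∧ c ≤ a) : a ∈ Cl F := by
  intro ξ hξ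
  obtain ⟨c, hc, h1, h2⟩ := h ξ hξ
  exact (hc ξ h1).trans_le h2

/-- Unboundedly many candidates for each of at most `#ι` tasks allow an injective choice. -/
lemma Idx.inj_choice (hι : Idx ι) {τ : Type u} (hτ : #τ ≤ #ι) (S : τ → Set ι)
    (hS : ∀ t b, ∃ s ∈ S t, b ≤ s) : ∃ a : τ → ι, Function.Injective a ∧ ∀ t, a t ∈ S t := by
  classical
  have := hι.wf
  obtain ⟨e⟩ := hτ
  have hne : Nonempty ι := mk_ne_zero_iff.1 hι.reg.ne_zero
  let a : ι → ι := wellFounded_lt.fix fun i ih =>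
    Classical.epsilon fun s => (∀ j (hj : j < i), ih j hj < s) ∧ ∀ t, e t = i → s ∈ S t
  have ha : ∀ i, (∀ j < i, a j < a i) ∧ ∀ t, e t = i → a i ∈ S t := by
    intro i
    have hai : a i = Classical.epsilon fun s => (∀ j (_ : j < i), a j < s) ∧
        ∀ t, e t = i → s ∈ S t := wellFounded_lt.fix_eq _ i
    rw [hai]
    refine Classical.epsilon_spec (p := fun s => (∀ j (_ : j < i), a j < s) ∧
        ∀ t, e t = i → s ∈ S t) ?_
    obtain ⟨b, hb⟩ := hι.bdd (a '' Iio i) (Small.image (hι.iio i) a)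
    by_cases h : ∃ t, e t = i
    · obtain ⟨t, rfl⟩ := h
      obtain ⟨s, hs, hbs⟩ := hS t b
      refine ⟨s, fun j hj => (hb _ ⟨j, hj, rfl⟩).trans_le hbs, fun t' ht' => ?_⟩
      rwa [e.injective ht']
    · exact ⟨b, fun j hj => hb _ ⟨j, hj, rfl⟩, fun t ht => (h ⟨t, ht⟩).elim⟩
  have hmono : StrictMono a := fun j i hj => (ha i).1 j hj
  exact ⟨fun t => a (e t), hmono.injective.comp e.injective, fun t => (ha (e t)).2 t rfl⟩

end Index

/-! ### Hindrances from stationary sets -/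

section Stationary
open Cardinal
variable {M W ι : Type u} {E : M → W → Prop} [LinearOrder ι]

/-- Stationarily many men `h α` left single by a partial matching `f` produce a hindrance, provided
each `h α` lies in a set `Rp α` that is closed under alternating paths except for women from
earlier small sets `K β`.

The search from `h α` is stopped at the set `V α` of women involved before stage `α`. A woman `t`
at which stationarily many searches are stopped can be taken care of by one of these searches,
which switches along an alternating path; different searches use disjoint switches. The other
women block no search whose index lies in a suitable club. -/
lemma hind_of_stat (hι : Idx ι) {A : Set M} {B : Set W} {f : W → M} {Dom : Set W}
    (hf : InjOn f Dom) (hadj : ∀ w ∈ Dom, E (f w) w) {Φ : Set ι} {h : ι → M} (hinj : InjOn h Φ)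
    (hh : ∀ a ∈ Φ, ∀ w ∈ Dom, f w ≠ h a) {K : ι → Set W} (hK : ∀ a, Small ι (K a))
    {Rp : ι → Set M} (hRA : ∀ a ∈ Φ, Rp a ⊆ A) (hhR : ∀ a ∈ Φ, h a ∈ Rp a)
    (hR : ∀ a ∈ Φ, ∀ w ∈ Nbr E (Rp a) ∩ B, (w ∈ Dom ∧ f w ∈ Rp a) ∨ ∃ b < a, w ∈ K b)
    (hst : Stat Φ) : Hind E A B := by
  classical
  have := hι.wf
  have hneι : Nonempty ι := mk_ne_zero_iff.1 hι.reg.ne_zero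
  have key : ∀ (V : Set W) (a : ι) (t : W), ∃ p : Set W × (W → M),
      t ∈ Nbr E (reach E f ((Dom ∩ B) \ V) (h a)) → t ∈ V →
      p.1.Finite ∧ p.1 ⊆ ((Dom ∩ B) \ V) ∩ Nbr E (reach E f ((Dom ∩ B) \ V) (h a)) ∧
      InjOn p.2 (insert t p.1) ∧
      ∀ w ∈ insert t p.1, E (p.2 w) w ∧ p.2 w ∈ insert (h a) (f '' p.1) := by
    intro V a t
    by_cases c : t ∈ Nbr E (reach E f ((Dom ∩ B) \ V) (h a)) ∧ t ∈ V
    · obtain ⟨Q, q1, q2, g, q3, q4⟩ := reach_switch c.1 (fun hc => hc.2 c.2)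
      exact ⟨(Q, g), fun _ _ => ⟨q1, q2, q3, q4⟩⟩
    · exact ⟨(∅, fun _ => h a), fun c1 c2 => (c ⟨c1, c2⟩).elim⟩
  choose q hq using key
  -- the women newly involved at stage `a`, given the set `V` of those involved before
  let piece : Set W → ι → Set W := fun V a => K a ∪
    {w | ∃ t ∈ Nbr E (reach E f ((Dom ∩ B) \ V) (h a)) ∩ V, w ∈ (q V a t).1}
  let C : ι → Set W := wellFounded_lt.fix fun a ih => piece {w | ∃ b, ∃ hb : b < a, w ∈ ih b hb} a
  let V : ι → Set W := fun a => {w | ∃ b ∈ Iio a, w ∈ C b}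
  have hC : ∀ a, C a = piece (V a) a := by
    intro a
    have h1 : C a = piece {w | ∃ b, ∃ _ : b < a, w ∈ C b} a := wellFounded_lt.fix_eq _ a
    rw [h1]
    congr 1
    ext w
    simp [V]
  let U : ι → Set W := fun a => (Dom ∩ B) \ V a
  let R : ι → Set M := fun a => reach E f (U a) (h a)
  let N : ι → Set W := fun a => Nbr E (R a) ∩ B ∩ V a
  let Q : ι → W → Set W := fun a t => (q (V a) a t).1
  let G : ι → W → W → M := fun a t => (q (V a) a t).2
  have hQ : ∀ a, ∀ t ∈ N a, (Q a t).Finite ∧ Q a t ⊆ U a ∩ Nbr E (R a) ∧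
      InjOn (G a t) (insert t (Q a t)) ∧
      ∀ w ∈ insert t (Q a t), E (G a t w) w ∧ G a t w ∈ insert (h a) (f '' Q a t) :=
    fun a t ht => hq (V a) a t ht.1.1 ht.2
  have hCs : ∀ a, Small ι (C a) := by
    intro a
    induction a using WellFoundedLT.induction with
    | _ a ih =>
      have hV : Small ι (V a) := hι.small_biUnion (hι.iio a) ih
      rw [hC]
      refine hι.small_union (hK a) (hι.small_biUnion (hV.mono inter_subset_right) ?_)
      exact fun t ht => hι.small_finite (hq (V a) a t ht.1 ht.2).1
  have hKC : ∀ a, K a ⊆ C a := fun a => by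
    rw [hC]
    exact subset_union_left
  have hQC : ∀ a, ∀ t ∈ N a, Q a t ⊆ C a := fun a t ht w hw => by
    rw [hC]
    exact Or.inr ⟨t, ⟨ht.1.1, ht.2⟩, hw⟩
  have hRsub : ∀ a ∈ Φ, R a ⊆ Rp a := by
    intro a ha
    refine reach_subset (hhR a ha) fun w hw hU => ?_
    rcases hR a ha w ⟨hw, hU.1.2⟩ with h1 | ⟨b, hb, hw⟩
    · exact h1.2
    · exact (hU.2 ⟨b, hb, hKC b hw⟩).elim
  have hNU : ∀ a ∈ Φ, ∀ w ∈ Nbr E (R a) ∩ B, w ∉ N a → w ∈ U a := by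
    intro a ha w hw hn
    have hV : w ∉ V a := fun hV => hn ⟨hw, hV⟩
    refine ⟨⟨?_, hw.2⟩, hV⟩
    rcases hR a ha w ⟨nbr_mono (hRsub a ha) hw.1, hw.2⟩ with h1 | ⟨b, hb, hwK⟩
    · exact h1.1
    · exact (hV ⟨b, hb, hKC b hwK⟩).elim
  have hdisj : ∀ a b t s, a < b → t ∈ N a → s ∈ N b → ∀ w ∈ Q a t, w ∉ Q b s := by
    intro a b t s hab ht hs w hw hw'
    exact ((hQ b s hs).2.1 hw').1.2 ⟨a, hab, hQC a t ht hw⟩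
  -- `T` consists of the women at which stationarily many searches are stopped
  let Φt : W → Set ι := fun t => {a | a ∈ Φ ∧ t ∈ N a}
  let T : Set W := {t | Stat (Φt t)}
  have hFt : ∀ t, ∃ F : ι → ι, t ∉ T → ∀ a ∈ Φt t, a ∉ Cl F := by
    intro t
    by_cases ht : t ∈ T
    · exact ⟨id, fun h => (h ht).elim⟩
    · have : ¬ Stat (Φt t) := ht
      unfold Stat at this
      push Not at this
      obtain ⟨F, hF⟩ := this
      exact ⟨F, fun _ => hF⟩
  choose Ft hFt using hFt
  -- the diagonal intersection of the clubs avoiding `Φt t`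
  have hF : ∀ ξ, ∃ b, ∀ η ≤ ξ, ∀ b' ≤ ξ, ∀ t ∈ C b', Ft t η < b := by
    intro ξ
    have hs : Small ι {t | ∃ b' ∈ Iic ξ, t ∈ C b'} :=
      hι.small_biUnion (hι.small_iic ξ) fun b _ => hCs b
    obtain ⟨b, hb⟩ := hι.bdd _ (hι.small_biUnion (T := fun t => Ft t '' Iic ξ) hs
      fun t _ => (hι.small_iic ξ).image _)
    exact ⟨b, fun η hη b' hb' t ht => hb _ ⟨t, ⟨b', hb', ht⟩, η, hη, rfl⟩⟩
  choose F hF using hF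
  have hNT : ∀ a ∈ Φ, a ∈ Cl F → N a ⊆ T := by
    intro a ha hcl t ht
    by_contra htT
    have := hFt t htT a ⟨ha, ht⟩
    simp only [Cl, mem_ofPred_eq, not_forall, not_lt] at this
    obtain ⟨ξ, hξ, hle⟩ := this
    obtain ⟨b, hb, htC⟩ := ht.2
    have h1 := hF (max ξ b) ξ (le_max_left _ _) b (le_max_right _ _) t htC
    exact ((hle.trans_lt h1).trans (hcl _ (max_lt hξ hb))).false
  obtain ⟨a0, ha0, hcl0⟩ := hst F
  have hTcard : #T ≤ #ι := by
    have hsub : T ⊆ ⋃ a, C a := by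
      intro t ht
      obtain ⟨a, ha, -⟩ := ht id
      obtain ⟨b, -, hb⟩ := ha.2.2
      exact mem_iUnion.2 ⟨b, hb⟩
    exact (mk_le_mk_of_subset hsub).trans ((mk_iUnion_le C).trans
      (mul_le_of_le hι.reg.aleph0_le le_rfl (ciSup_le' fun b => (hCs b).le)))
  obtain ⟨a, ainj, ha⟩ := hι.inj_choice hTcard
    (fun t => {b | b ∈ Φt t ∧ b ∈ Cl F ∧ b ≠ a0}) (by
      rintro ⟨t, ht⟩ b
      obtain ⟨c, hc, hcl⟩ := ht (fun ξ => max (F ξ) (max b a0))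
      obtain ⟨d, hd, -⟩ := hc.2.2
      have h1 := hcl d hd
      refine ⟨c, ⟨hc, fun ξ hξ => (le_max_left _ _).trans_lt (hcl ξ hξ), ?_⟩, ?_⟩
      · exact (((le_max_right _ _).trans (le_max_right _ _)).trans_lt h1).ne'
      · exact (((le_max_left _ _).trans (le_max_right _ _)).trans_lt h1).le)
  have haN : ∀ t : T, t.1 ∈ N (a t) := fun t => (ha t).1.2
  have haΦ : ∀ t : T, a t ∈ Φ := fun t => (ha t).1.1
  -- `own t w`: the woman `w` is matched by the search `a t`, which takes care of `t`
  let own : T → W → Prop := fun t w =>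
    w ∈ Q (a t) t ∨ (w = t ∧ ∀ t' : T, w ∉ Q (a t') t')
  have hownT : ∀ w ∈ T, ∃ t, own t w := by
    intro w hw
    by_cases c : ∃ t' : T, w ∈ Q (a t') t'
    · obtain ⟨t', ht'⟩ := c
      exact ⟨t', Or.inl ht'⟩
    · push Not at c
      exact ⟨⟨w, hw⟩, Or.inr ⟨rfl, c⟩⟩
  have hownI : ∀ t w, own t w → w ∈ insert t.1 (Q (a t) t) := by
    rintro t w (c | c)
    · exact Or.inr c
    · exact Or.inl c.1
  have hg : ∀ w, ∃ y : M, ((∃ t, own t w) → ∃ t, own t w ∧ y = G (a t) t w) ∧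
      ((¬ ∃ t, own t w) → y = f w) := by
    intro w
    by_cases c : ∃ t, own t w
    · obtain ⟨t, ht⟩ := c
      exact ⟨G (a t) t w, fun _ => ⟨t, ht, rfl⟩, fun c => (c ⟨t, ht⟩).elim⟩
    · exact ⟨f w, fun c' => (c c').elim, fun _ => rfl⟩
  choose g hg1 hg2 using hg
  -- the hindrance; the search from `h a0` takes care of nobody, so `h a0` stays single
  let X : Set M := {x | ∃ b ∈ Φ ∩ Cl F, x ∈ R b}
  have hNX : ∀ w ∈ Nbr E X ∩ B, (¬ ∃ t, own t w) →
      w ∈ Dom ∧ f w ∈ X := by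
    rintro w ⟨⟨x, ⟨b, hb, hx⟩, hxw⟩, hwB⟩ hno
    have hU := hNU b hb.1 w ⟨⟨x, hx, hxw⟩, hwB⟩ fun hN => hno (hownT w (hNT b hb.1 hb.2 hN))
    exact ⟨hU.1.1, b, hb, reach_closed ⟨x, hx, hxw⟩ hU⟩
  have hQDom : ∀ t : T, Q (a t) t ⊆ Dom := fun t w hw => ((hQ _ _ (haN t)).2.1 hw).1.1.1
  have cross : ∀ w w', (∃ t, own t w) → w' ∈ Nbr E X ∩ B → (¬ ∃ t, own t w') → g w ≠ g w' := by
    intro w w' c hw' c' he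
    obtain ⟨t, ht, e⟩ := hg1 w c
    have hD := (hNX w' hw' c').1
    rw [e, hg2 w' c'] at he
    have hv := ((hQ _ _ (haN t)).2.2.2 w (hownI t w ht)).2
    change G (a t) t w ∈ _ at hv
    rw [he] at hv
    rcases hv with hv | ⟨v, hv, e'⟩
    · exact hh _ (haΦ t) _ hD hv
    · have := hf (hQDom t hv) hD e'
      exact c' ⟨t, Or.inl (this ▸ hv)⟩
  refine ⟨X, h a0, g, ?_, ⟨a0, ⟨ha0, hcl0⟩, self_mem_reach⟩, ?_, ?_⟩
  · rintro x ⟨b, hb, hx⟩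
    exact hRA b hb.1 (hRsub b hb.1 hx)
  · intro w hw w' hw' he
    by_cases c : ∃ t, own t w <;> by_cases c' : ∃ t, own t w'
    · obtain ⟨t, ht, e⟩ := hg1 w c
      obtain ⟨t', ht', e'⟩ := hg1 w' c'
      have hv := ((hQ _ _ (haN t)).2.2.2 w (hownI t w ht)).2
      have hv' := ((hQ _ _ (haN t')).2.2.2 w' (hownI t' w' ht')).2
      rw [e, e'] at he
      by_cases htt : t = t'
      · subst htt
        exact (hQ _ _ (haN t)).2.2.1 (hownI t w ht) (hownI t w' ht') he
      exfalso
      have hane : a t ≠ a t' := fun h => htt (ainj h)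
      change G (a t) t w ∈ _ at hv
      rw [he] at hv
      rcases hv with hv | ⟨v, hv, ev⟩ <;> rcases hv' with hv' | ⟨v', hv', ev'⟩
      · exact hane (hinj (haΦ t) (haΦ t') (hv.symm.trans hv'))
      · exact hh _ (haΦ t) _ (hQDom t' hv') (ev'.trans hv)
      · exact hh _ (haΦ t') _ (hQDom t hv) (ev.trans hv')
      · have := hf (hQDom t hv) (hQDom t' hv') (ev.trans ev'.symm)
        subst this
        rcases lt_or_gt_of_ne hane with hlt | hlt
        · exact hdisj _ _ _ _ hlt (haN t) (haN t') v hv hv'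
        · exact hdisj _ _ _ _ hlt (haN t') (haN t) v hv' hv
    · exact (cross w w' c hw' c' he).elim
    · exact (cross w' w c' hw c he.symm).elim
    · rw [hg2 w c, hg2 w' c'] at he
      exact hf (hNX w hw c).1 (hNX w' hw' c').1 he
  · intro w hw
    by_cases c : ∃ t, own t w
    · obtain ⟨t, ht, e⟩ := hg1 w c
      have hv := (hQ _ _ (haN t)).2.2.2 w (hownI t w ht)
      rw [e]
      refine ⟨⟨a t, ⟨haΦ t, (ha t).2.1⟩, ?_⟩, ?_, hv.1⟩
      · rcases hv.2 with h1 | ⟨v, hv, ev⟩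
        · rw [h1]
          exact self_mem_reach
        · rw [← ev]
          have := (hQ _ _ (haN t)).2.1 hv
          exact reach_closed this.2 this.1
      · intro he
        rcases hv.2 with h1 | ⟨v, hv, ev⟩
        · exact (ha t).2.2 (hinj (haΦ t) ha0 (h1.symm.trans he))
        · exact hh a0 ha0 v (hQDom t hv) (ev.trans he)
    · have := hNX w hw c
      rw [hg2 w c]
      exact ⟨this.2, hh a0 ha0 w this.1, hadj w this.1⟩

end Stationary

/-! ### Ladders -/

section LadderDef
open Cardinal
variable {M W ι : Type u} [LinearOrder ι]

/-- The union of the sets `X b` with `b < a`. -/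
def below {α : Type u} (X : ι → Set α) (a : ι) : Set α := {m | ∃ b ∈ Iio a, m ∈ X b}

lemma below_mono {α : Type u} (X : ι → Set α) {a b : ι} (h : a ≤ b) : below X a ⊆ below X b :=
  fun _ ⟨c, hc, hm⟩ => ⟨c, lt_of_lt_of_le hc h, hm⟩

lemma subset_below {α : Type u} (X : ι → Set α) {a b : ι} (h : a < b) : X a ⊆ below X b :=
  fun _ hm => ⟨a, h, hm⟩

/-- A ladder: a transfinite process on the graph induced by `A` and `B`. At stage `a` the men in
`below X a` and the women in `below Y a` have been removed. If the remaining graph is hindered, a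
hindrance `X a` with all its neighbours is removed next. In any case the women `w a m` are removed,
where `m` runs over the small set `below Z a`; if the remaining graph is unhindered, it stays so
after `m` and `w a m` have been removed. The sets `Z a` contain prescribed sets `Z₀ a` and are
closed under `ζ` composed with the matchings that are later used, namely `w` and matchings
`G c d S` of the men removed between stages `c` and `d` to women not removed before `c`
and not in `S`. -/
structure Ladder (E : M → W → Prop) (A : Set M) (B : Set W) (Z₀ : ι → Set M)
    (ζ : W → Set M) where
  X : ι → Set M
  Y : ι → Set W
  K : ι → Set W
  Z : ι → Set M
  f : ι → W → M
  h : ι → M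
  w : ι → M → W
  G : ι → ι → Set W → M → W
  hY : ∀ a, Y a = (Nbr E (X a) ∩ B) ∪ K a
  hK : ∀ a, K a = w a '' below Z a
  hind : ∀ a, Hind E (A \ below X a) (B \ below Y a) →
    IsHind E (A \ below X a) (B \ below Y a) (X a) (h a) (f a) ∧
      ∀ x ∈ X a, x ≠ h a → ∃ v ∈ Nbr E (X a) ∩ (B \ below Y a), f a v = x
  unh : ∀ a, ¬ Hind E (A \ below X a) (B \ below Y a) → X a = ∅
  wspec : ∀ a, ¬ Hind E (A \ below X a) (B \ below Y a) → ∀ m ∈ A \ below X a,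
    w a m ∈ B \ below Y a ∧ E m (w a m) ∧
      ¬ Hind E ((A \ below X a) \ {m}) ((B \ below Y a) \ {w a m})
  Gspec : ∀ c d S, (∃ g, IsMatching E (below X d \ below X c) ((B \ below Y c) \ S) g) →
    IsMatching E (below X d \ below X c) ((B \ below Y c) \ S) (G c d S)
  Zsmall : ∀ a, Small ι (Z a)
  Z₀sub : ∀ a, Z₀ a ⊆ Z a
  Zw : ∀ a, ∀ c ≤ a, ∀ m ∈ below Z a, ζ (w c m) ⊆ Z a
  ZG : ∀ a, ∀ c ≤ a, ∀ d ≤ a, ∀ S, (S = ∅ ∨ ∃ m ∈ below Z a, S = {w c m}) → ∀ m ∈ below Z a,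
    ζ (G c d S m) ⊆ Z a

lemma exists_rec {D : Type*} [WellFoundedLT ι] (step : ι → (ι → D) → D) (d : D) :
    ∃ T : ι → D, ∀ a, T a = step a (fun b => open Classical in if b < a then T b else d) := by
  classical
  refine ⟨wellFounded_lt.fix fun a ih => step a (fun b => if h : b < a then ih b h else d), ?_⟩
  intro a
  rw [wellFounded_lt.fix_eq]
  rfl

lemma exists_ladder [Nonempty M] [Nonempty W] (hι : Idx ι) (E : M → W → Prop)
    (A : Set M) (B : Set W) (Z₀ : ι → Set M) (ζ : W → Set M)
    (hZ₀ : ∀ a, Small ι (Z₀ a)) (hζ : ∀ w, Small ι (ζ w)) :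
    Nonempty (Ladder E A B Z₀ ζ) := by
  classical
  have := hι.wf
  have key1 : ∀ (M' : Set M) (W' : Set W), ∃ p : Set M × M × (W → M),
      (Hind E (A \ M') (B \ W') → IsHind E (A \ M') (B \ W') p.1 p.2.1 p.2.2 ∧
        ∀ x ∈ p.1, x ≠ p.2.1 → ∃ v ∈ Nbr E p.1 ∩ (B \ W'), p.2.2 v = x) ∧
      (¬ Hind E (A \ M') (B \ W') → p.1 = ∅) := by
    intro M' W'
    by_cases c : Hind E (A \ M') (B \ W')
    · obtain ⟨X, h, f, hs⟩ := c.exists_surj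
      exact ⟨(X, h, f), fun _ => hs, fun c' => (c' c).elim⟩
    · exact ⟨(∅, Classical.arbitrary M, fun _ => Classical.arbitrary M), fun c' => (c c').elim,
        fun _ => rfl⟩
  choose p hp1 hp2 using key1
  have key2 : ∀ (M' : Set M) (W' : Set W) (m : M), ∃ v : W, ¬ Hind E (A \ M') (B \ W') →
      m ∈ A \ M' → v ∈ B \ W' ∧ E m v ∧ ¬ Hind E ((A \ M') \ {m}) ((B \ W') \ {v}) := by
    intro M' W' m
    by_cases c : ¬ Hind E (A \ M') (B \ W') ∧ m ∈ A \ M'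
    · obtain ⟨v, h1, h2⟩ := single_step c.1 c.2
      exact ⟨v, fun _ _ => ⟨h1, h2⟩⟩
    · exact ⟨Classical.arbitrary W, fun c1 c2 => (c ⟨c1, c2⟩).elim⟩
  choose wc hwc using key2
  have key3 : ∀ (M' : Set M) (W' : Set W) (M'' : Set M) (S : Set W), ∃ g' : M → W,
      (∃ g, IsMatching E (M'' \ M') ((B \ W') \ S) g) →
        IsMatching E (M'' \ M') ((B \ W') \ S) g' := by
    intro M' W' M'' S
    by_cases c : ∃ g, IsMatching E (M'' \ M') ((B \ W') \ S) g
    · exact ⟨c.choose, fun _ => c.choose_spec⟩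
    · exact ⟨fun _ => Classical.arbitrary W, fun c' => (c c').elim⟩
  choose Gc hGc using key3
  -- the data of a stage: `X`, `K` and `Z`
  let D := Set M × Set W × Set M
  let fX : (ι → D) → ι → Set M := fun x a => below (fun b => (x b).1) a
  let fY : (ι → D) → ι → Set W := fun x a =>
    below (fun b => (Nbr E (x b).1 ∩ B) ∪ (x b).2.1) a
  let fZ : (ι → D) → ι → Set M := fun x a => below (fun b => (x b).2.2) a
  let step : ι → (ι → D) → D := fun a x =>
    ((p (fX x a) (fY x a)).1, wc (fX x a) (fY x a) '' fZ x a,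
      Z₀ a ∪ ({z | ∃ c ∈ Iic a, z ∈ {z | ∃ m ∈ fZ x a, z ∈ ζ (wc (fX x c) (fY x c) m)}} ∪
        {z | ∃ c ∈ Iic a, z ∈ {z | ∃ d ∈ Iic a, z ∈ {z |
          ∃ S ∈ insert ∅ ((fun m => ({wc (fX x c) (fY x c) m} : Set W)) '' fZ x a), z ∈ {z |
            ∃ m ∈ fZ x a, z ∈ ζ (Gc (fX x c) (fY x c) (fX x d) S m)}}}}))
  obtain ⟨T, hT⟩ := exists_rec step (∅, ∅, ∅)
  have eX : ∀ a c, c ≤ a → fX (fun b => if b < a then T b else (∅, ∅, ∅)) c = fX T c := by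
    intro a c hc
    ext m
    refine exists_congr fun b => and_congr_right fun hb => ?_
    beta_reduce
    rw [if_pos (lt_of_lt_of_le hb hc)]
  have eY : ∀ a c, c ≤ a → fY (fun b => if b < a then T b else (∅, ∅, ∅)) c = fY T c := by
    intro a c hc
    ext m
    refine exists_congr fun b => and_congr_right fun hb => ?_
    beta_reduce
    rw [if_pos (lt_of_lt_of_le hb hc)]
  have eZ : ∀ a c, c ≤ a → fZ (fun b => if b < a then T b else (∅, ∅, ∅)) c = fZ T c := by
    intro a c hc
    ext m
    refine exists_congr fun b => and_congr_right fun hb => ?_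
    beta_reduce
    rw [if_pos (lt_of_lt_of_le hb hc)]
  have h1 : ∀ a, (T a).1 = (p (fX T a) (fY T a)).1 := by
    intro a
    rw [hT a]
    change (p (fX _ a) (fY _ a)).1 = _
    rw [eX a a le_rfl, eY a a le_rfl]
  have h2 : ∀ a, (T a).2.1 = wc (fX T a) (fY T a) '' fZ T a := by
    intro a
    rw [hT a]
    change wc (fX _ a) (fY _ a) '' fZ _ a = _
    rw [eX a a le_rfl, eY a a le_rfl, eZ a a le_rfl]
  have h3 : ∀ a, (T a).2.2 = (step a T).2.2 := by
    intro a
    rw [hT a]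
    dsimp only [step]
    congr 2
    · ext z
      refine exists_congr fun c => and_congr_right fun hc => ?_
      rw [eX a c hc, eY a c hc, eZ a a le_rfl]
    · ext z
      refine exists_congr fun c => and_congr_right fun hc => exists_congr fun d =>
        and_congr_right fun hd => ?_
      rw [eX a c hc, eY a c hc, eX a d hd, eZ a a le_rfl]
  have hsm : ∀ a, Small ι (T a).2.2 := by
    intro a
    induction a using WellFoundedLT.induction with
    | _ a ih =>
      have hZ : Small ι (fZ T a) := hι.small_biUnion (hι.iio a) ih
      rw [h3]
      refine hι.small_union (hZ₀ a) (hι.small_union ?_ ?_)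
      · exact hι.small_biUnion (hι.small_iic a) fun c _ => hι.small_biUnion hZ fun _ _ => hζ _
      · refine hι.small_biUnion (hι.small_iic a) fun c _ =>
          hι.small_biUnion (hι.small_iic a) fun d _ => hι.small_biUnion ?_ fun _ _ =>
            hι.small_biUnion hZ fun _ _ => hζ _
        rw [insert_eq]
        exact hι.small_union (hι.small_finite (finite_singleton _)) (hZ.image _)
  refine ⟨{
    X := fun a => (T a).1
    Y := fun a => (Nbr E (T a).1 ∩ B) ∪ (T a).2.1
    K := fun a => (T a).2.1
    Z := fun a => (T a).2.2
    f := fun a => (p (fX T a) (fY T a)).2.2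
    h := fun a => (p (fX T a) (fY T a)).2.1
    w := fun a => wc (fX T a) (fY T a)
    G := fun c d S => Gc (fX T c) (fY T c) (fX T d) S
    hY := fun a => rfl
    hK := h2
    hind := fun a ha => by rw [h1]; exact hp1 (fX T a) (fY T a) ha
    unh := fun a ha => by rw [h1]; exact hp2 (fX T a) (fY T a) ha
    wspec := fun a ha m hm => hwc _ _ _ ha hm
    Gspec := fun c d S hg => hGc _ _ _ _ hg
    Zsmall := hsm
    Z₀sub := fun a => by rw [h3]; exact subset_union_left
    Zw := ?_
    ZG := ?_ }⟩
  · intro a c hc m hm z hz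
    rw [h3 a]
    exact Or.inr (Or.inl ⟨c, hc, m, hm, hz⟩)
  · intro a c hc d hd S hS m hm z hz
    rw [h3 a]
    refine Or.inr (Or.inr ⟨c, hc, d, hd, S, ?_, m, hm, hz⟩)
    rcases hS with rfl | ⟨m', hm', rfl⟩
    · exact mem_insert _ _
    · exact Or.inr ⟨m', hm', rfl⟩

end LadderDef

/-! ### Hindered stages and matchings along a ladder -/

section LadderFacts
open Cardinal
variable {M W ι : Type u} [LinearOrder ι] {E : M → W → Prop} {A : Set M} {B : Set W}
  {Z₀ : ι → Set M} {ζ : W → Set M} (l : Ladder E A B Z₀ ζ)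

namespace Ladder

/-- The stages of the ladder at which the remaining graph is hindered. -/
def hstages : Set ι := {a | Hind E (A \ below l.X a) (B \ below l.Y a)}

lemma mem_hstages {a : ι} {m : M} (hm : m ∈ l.X a) : a ∈ l.hstages := by
  by_contra h
  rw [l.unh a h] at hm
  exact hm

lemma X_sub (a : ι) : l.X a ⊆ A \ below l.X a :=
  fun _ hm => (l.hind a (l.mem_hstages hm)).1.1 hm

lemma X_unique {a b : ι} {m : M} (ha : m ∈ l.X a) (hb : m ∈ l.X b) : a = b := by
  rcases lt_trichotomy a b with h | h | h
  · exact ((l.X_sub b hb).2 ⟨a, h, ha⟩).elim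
  · exact h
  · exact ((l.X_sub a ha).2 ⟨b, h, hb⟩).elim

lemma nbr_sub_Y (a : ι) : Nbr E (l.X a) ∩ B ⊆ l.Y a := by
  rw [l.hY]
  exact subset_union_left

lemma w_mem_Y {a : ι} {m : M} (hm : m ∈ below l.Z a) : l.w a m ∈ l.Y a := by
  rw [l.hY, l.hK]
  exact Or.inr ⟨m, hm, rfl⟩

/-- The women with a partner in the hindrances removed by the ladder. -/
def dom : Set W := {w | ∃ a, w ∈ Nbr E (l.X a) ∩ (B \ below l.Y a)}

lemma dom_unique {a b : ι} {w : W} (ha : w ∈ Nbr E (l.X a) ∩ (B \ below l.Y a))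
    (hb : w ∈ Nbr E (l.X b) ∩ (B \ below l.Y b)) : a = b := by
  rcases lt_trichotomy a b with h | h | h
  · exact (hb.2.2 ⟨a, h, l.nbr_sub_Y a ⟨ha.1, ha.2.1⟩⟩).elim
  · exact h
  · exact (ha.2.2 ⟨b, h, l.nbr_sub_Y b ⟨hb.1, hb.2.1⟩⟩).elim

/-- The matchings of the removed hindrances fit together. -/
lemma exists_partner [Nonempty M] : ∃ F : W → M, ∀ a, ∀ w ∈ Nbr E (l.X a) ∩ (B \ below l.Y a),
    F w = l.f a w := by
  have : ∀ w, ∃ y, ∀ a, w ∈ Nbr E (l.X a) ∩ (B \ below l.Y a) → y = l.f a w := by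
    intro w
    by_cases h : w ∈ l.dom
    · obtain ⟨a, ha⟩ := h
      refine ⟨l.f a w, fun b hb => ?_⟩
      rw [l.dom_unique ha hb]
    · exact ⟨Classical.arbitrary M, fun a ha => (h ⟨a, ha⟩).elim⟩
  choose F hF using this
  exact ⟨F, fun a w => hF w a⟩

lemma f_spec {a : ι} {w : W} (hw : w ∈ Nbr E (l.X a) ∩ (B \ below l.Y a)) :
    l.f a w ∈ l.X a ∧ l.f a w ≠ l.h a ∧ E (l.f a w) w := by
  obtain ⟨x, hx, -⟩ := hw.1
  exact (l.hind a (l.mem_hstages hx)).1.2.2.2 w hw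

lemma h_mem {a : ι} (ha : a ∈ l.hstages) : l.h a ∈ l.X a := (l.hind a ha).1.2.1

/-- If the whole graph is unhindered, then the ladder meets hindered graphs only at a
nonstationary set of stages. -/
lemma not_stat [Nonempty M] (hι : Idx ι) (hu : ¬ Hind E A B) : ¬ Stat l.hstages := by
  intro hst
  have := hι.wf
  obtain ⟨F, hF⟩ := l.exists_partner
  refine hu (hind_of_stat hι (f := F) (Dom := l.dom) (h := l.h) (K := l.K)
    (Rp := fun a => {m | ∃ b ≤ a, m ∈ l.X b}) ?_ ?_ ?_ ?_ ?_ ?_ ?_ ?_ hst)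
  · rintro w ⟨a, ha⟩ w' ⟨b, hb⟩ he
    rw [hF a w ha, hF b w' hb] at he
    have h1 := l.f_spec ha
    have h2 := l.f_spec hb
    rw [← he] at h2
    obtain rfl := l.X_unique h1.1 h2.1
    exact (l.hind a (l.mem_hstages h1.1)).1.2.2.1 ha hb he
  · rintro w ⟨a, ha⟩
    rw [hF a w ha]
    exact (l.f_spec ha).2.2
  · intro a ha b hb he
    have h1 := l.h_mem ha
    rw [he] at h1
    exact l.X_unique h1 (l.h_mem hb)
  · rintro a ha w ⟨b, hb⟩ he
    rw [hF b w hb] at he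
    have h1 := l.f_spec hb
    obtain rfl := l.X_unique (he ▸ h1.1) (l.h_mem ha)
    exact h1.2.1 he
  · intro a
    rw [l.hK]
    exact (hι.small_biUnion (hι.iio a) fun b _ => l.Zsmall b).image _
  · rintro a - m ⟨b, -, hm⟩
    exact (l.X_sub b hm).1
  · exact fun a ha => ⟨a, le_rfl, l.h_mem ha⟩
  · rintro a - w ⟨⟨x, ⟨b, hb, hx⟩, hxw⟩, hwB⟩
    have hN : w ∈ Nbr E (l.X b) ∩ B := ⟨⟨x, hx, hxw⟩, hwB⟩
    -- look at the stage `c` at which `w` is removed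
    obtain ⟨c, hc, hl⟩ := exists_least (p := fun c => w ∈ l.Y c) ⟨b, l.nbr_sub_Y b hN⟩
    have hcb : c ≤ b := not_lt.1 fun h => hl b h (l.nbr_sub_Y b hN)
    by_cases hcN : w ∈ Nbr E (l.X c)
    · have hcD : w ∈ Nbr E (l.X c) ∩ (B \ below l.Y c) :=
        ⟨hcN, hwB, fun ⟨d, hd, hdw⟩ => hl d hd hdw⟩
      refine Or.inl ⟨⟨c, hcD⟩, c, hcb.trans hb, ?_⟩
      rw [hF c w hcD]
      exact (l.f_spec hcD).1
    · refine Or.inr ⟨c, lt_of_le_of_ne (hcb.trans hb) ?_, ?_⟩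
      · rintro rfl
        exact hcN (le_antisymm hcb hb ▸ hN.1)
      · rw [l.hY] at hc
        exact hc.resolve_left fun h => hcN h.1

/-- Between an unhindered stage `c` and a later stage `d`, all removed men can be matched, even
without using the woman `w c m` for one man `m` who remains: the inverse of the matchings of the
hindrances misses fewer than `#ι` men. -/
lemma exists_G [Nonempty M] [Nonempty W] (hι : Idx ι) (hQ : ∀ κ, ℵ₀ ≤ κ → κ < #ι → QProp E κ)
    {c d : ι} (hc : c ∉ l.hstages) {S : Set W}
    (hS : S = ∅ ∨ ∃ m ∈ A \ below l.X d, m ∉ below l.X c ∧ S = {l.w c m}) :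
    ∃ g, IsMatching E (below l.X d \ below l.X c) ((B \ below l.Y c) \ S) g := by
  classical
  have hXA : below l.X d ⊆ A := fun m ⟨b, _, hm⟩ => (l.X_sub b hm).1
  have hu : ¬ Hind E (below l.X d \ below l.X c) ((B \ below l.Y c) \ S) := by
    rcases hS with rfl | ⟨m, hm, hmc, rfl⟩
    · intro h
      rw [sdiff_empty] at h
      exact hc (h.mono (sdiff_subset_sdiff_left hXA))
    · refine fun h => (l.wspec c hc m ⟨hm.1, hmc⟩).2.2 (h.mono ?_)
      rintro x ⟨hx1, hx2⟩
      exact ⟨⟨hXA hx1, hx2⟩, fun e => hm.2 ((mem_singleton_iff.1 e) ▸ hx1)⟩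
  have hSfin : S.Finite := by
    rcases hS with rfl | ⟨m, _, _, rfl⟩
    · exact finite_empty
    · exact finite_singleton _
  obtain ⟨F, hF⟩ := l.exists_partner
  -- the men not matched by the inverse of `F` outside `S`
  let H : Set M := l.h '' Iio d ∪ F '' S
  have hH : Small ι H := hι.small_union (Small.image (hι.iio d) _)
    ((hι.small_finite hSfin).image _)
  have key : ∀ x, ∃ v, x ∈ (below l.X d \ below l.X c) \ H →
      v ∈ (B \ below l.Y c) \ S ∧ F v = x ∧ E x v := by
    intro x
    by_cases hx : x ∈ (below l.X d \ below l.X c) \ H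
    · obtain ⟨⟨⟨b, hb, hxb⟩, hxc⟩, hxH⟩ := hx
      obtain ⟨v, hv, e⟩ := (l.hind b (l.mem_hstages hxb)).2 x hxb
        (fun e => hxH (Or.inl ⟨b, hb, e.symm⟩))
      have hcb : c ≤ b := not_lt.1 fun h => hxc ⟨b, h, hxb⟩
      have hFv : F v = x := (hF b v hv).trans e
      refine ⟨v, fun _ => ⟨⟨⟨hv.2.1, fun h => hv.2.2 (below_mono _ hcb h)⟩, fun h => ?_⟩, hFv, ?_⟩⟩
      · exact hxH (Or.inr ⟨v, h, hFv⟩)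
      · rw [← e]
        exact (l.f_spec hv).2.2
    · exact ⟨Classical.arbitrary W, fun h => (hx h).elim⟩
  choose φ hφ using key
  refine hQ (max #H ℵ₀) (le_max_right _ _) (max_lt hH hι.unc) _ _ H φ hu (le_max_left _ _) ⟨?_, ?_⟩
  · intro x hx y hy he
    rw [← (hφ x hx).2.1, he, (hφ y hy).2.1]
  · exact fun x hx => ⟨(hφ x hx).1, (hφ x hx).2.2⟩

end Ladder

lemma Idx.exists_floor (hι : Idx ι) (F : ι → ι) (b : ι) :
    ∃ c ∈ Cl F, c ≤ b ∧ ∀ c' ∈ Cl F, c' ≤ b → c' ≤ c := by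
  have := hι.wf
  obtain ⟨c, hc, hl⟩ := exists_least (p := fun a => ∀ c' ∈ Cl F, c' ≤ b → c' ≤ a)
    ⟨b, fun _ _ h => h⟩
  have hcb : c ≤ b := not_lt.1 fun h => hl b h fun _ _ h => h
  refine ⟨c, cl_closed fun ξ hξ => ?_, hcb, hc⟩
  have := hl ξ hξ
  push Not at this
  obtain ⟨c', h1, h2, h3⟩ := this
  exact ⟨c', h1, h3, hc c' h1 h2⟩

/-- The blocks of a club assembled: the men removed by the ladder (up to a stage `δ` of the club, if
`Δ = {δ}`, or altogether, if `Δ = ∅`) and the men of `L` are matched simultaneously. The club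
divides the stages into blocks; in each block the removed men are matched by some `G c d S`, and at
most one man `m` of `L`, the one with `a m = c`, by `w c`. -/
lemma Ladder.combine [Nonempty M] [Nonempty W] (hι : Idx ι)
    (hQ : ∀ κ, ℵ₀ ≤ κ → κ < #ι → QProp E κ) {F : ι → ι} (hF : ∀ c ∈ Cl F, c ∉ l.hstages)
    {Δ : Set ι} (hΔ : Δ ⊆ Cl F) {D L : Set M}
    (hD : D = {m | ∃ b, (∀ δ ∈ Δ, b < δ) ∧ m ∈ l.X b}) (hLA : L ⊆ A) (hLD : ∀ m ∈ L, m ∉ D)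
    {a : M → ι} (ainj : InjOn a L) (haC : ∀ m ∈ L, a m ∈ Cl F) (haZ : ∀ m ∈ L, m ∈ below l.Z (a m))
    (haΔ : ∀ m ∈ L, ∀ δ ∈ Δ, a m < δ) :
    ∃ g, IsMatching E (D ∪ L) B g ∧ (∀ m ∈ L, g m = l.w (a m) m) ∧
      ∀ m ∈ D, (∃ b, (∀ δ ∈ Δ, b < δ) ∧ g m ∈ l.Y b) ∧
        ∃ c d S, (S = ∅ ∨ ∃ m' ∈ L, a m' = c ∧ S = {l.w c m'}) ∧ g m = l.G c d S m := by
  classical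
  have := hι.wf
  have hnx : ∀ c, ∃ d ∈ Cl F, c < d ∧ ∀ d' ∈ Cl F, c < d' → d ≤ d' := by
    intro c
    obtain ⟨d, hd, hcd⟩ := hι.cl_unbdd F c
    obtain ⟨d, ⟨h1, h2⟩, h3⟩ := exists_least (p := fun d => d ∈ Cl F ∧ c < d) ⟨d, hd, hcd⟩
    exact ⟨d, h1, h2, fun d' h h' => not_lt.1 fun hlt => h3 d' hlt ⟨h, h'⟩⟩
  choose nx nx1 nx2 nx3 using hnx
  let S : ι → Set W := fun c => {v | ∃ m ∈ L, a m = c ∧ v = l.w c m}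
  have hS : ∀ c, S c = ∅ ∨ ∃ m ∈ L, a m = c ∧ S c = {l.w c m} := by
    intro c
    by_cases h : ∃ m ∈ L, a m = c
    · obtain ⟨m, hm, rfl⟩ := h
      refine Or.inr ⟨m, hm, rfl, ?_⟩
      ext v
      constructor
      · rintro ⟨m', hm', e, rfl⟩
        rw [ainj hm' hm e]
        rfl
      · rintro rfl
        exact ⟨m, hm, rfl, rfl⟩
    · left
      ext v
      refine ⟨?_, fun h => h.elim⟩
      rintro ⟨m, hm, e, -⟩
      exact (h ⟨m, hm, e⟩).elim
  have hDnx : ∀ c, (∀ δ ∈ Δ, c < δ) → below l.X (nx c) ⊆ D := by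
    rintro c hc m ⟨b, hb, hm⟩
    rw [hD]
    exact ⟨b, fun δ hδ => lt_of_lt_of_le hb (nx3 c δ (hΔ hδ) (hc δ hδ)), hm⟩
  have hDc : ∀ c, (∀ δ ∈ Δ, c < δ) → below l.X c ⊆ D := fun c hc =>
    (below_mono _ (nx2 c).le).trans (hDnx c hc)
  have hG : ∀ c ∈ Cl F, (∀ δ ∈ Δ, c < δ) → IsMatching E (below l.X (nx c) \ below l.X c)
      ((B \ below l.Y c) \ S c) (l.G c (nx c) (S c)) := by
    intro c hc hcΔ
    refine l.Gspec _ _ _ (l.exists_G hι hQ (hF c hc) ?_)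
    rcases hS c with h | ⟨m, hm, -, h⟩
    · exact Or.inl h
    · exact Or.inr ⟨m, ⟨hLA hm, fun h => hLD m hm (hDnx c hcΔ h)⟩,
        fun h => hLD m hm (hDc c hcΔ h), h⟩
  have hw : ∀ m ∈ L, l.w (a m) m ∈ B \ below l.Y (a m) ∧ E m (l.w (a m) m) := by
    intro m hm
    have := l.wspec (a m) (hF _ (haC m hm)) m ⟨hLA hm, fun h => hLD m hm (hDc _ (haΔ m hm) h)⟩
    exact ⟨this.1, this.2.1⟩
  have key : ∀ m, ∃ v, (m ∈ L → v = l.w (a m) m) ∧ (m ∈ D → ∃ b c, (∀ δ ∈ Δ, b < δ) ∧ c ∈ Cl F ∧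
      c ≤ b ∧ b < nx c ∧ m ∈ l.X b ∧ v = l.G c (nx c) (S c) m) := by
    intro m
    by_cases hm : m ∈ D
    · have hm' := hm
      rw [hD] at hm'
      obtain ⟨b, hb, hmb⟩ := hm'
      obtain ⟨c, hc, hcb, hcm⟩ := hι.exists_floor F b
      refine ⟨l.G c (nx c) (S c) m, fun h => (hLD m h hm).elim, fun _ => ⟨b, c, hb, hc, hcb, ?_,
        hmb, rfl⟩⟩
      exact not_le.1 fun h => (nx2 c).not_ge (hcm _ (nx1 c) h)
    · exact ⟨l.w (a m) m, fun _ => rfl, fun h => (hm h).elim⟩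
  choose g hgL hgD using key
  have hgD' : ∀ m ∈ D, ∃ b c, (∀ δ ∈ Δ, b < δ) ∧ (∀ δ ∈ Δ, c < δ) ∧ c ∈ Cl F ∧ b < nx c ∧
      m ∈ below l.X (nx c) \ below l.X c ∧
      g m = l.G c (nx c) (S c) m ∧ g m ∈ (B \ below l.Y c) \ S c ∧ E m (g m) ∧ g m ∈ l.Y b := by
    intro m hm
    obtain ⟨b, c, h1, h2, h3, h4, h5, h6⟩ := hgD m hm
    have hcΔ : ∀ δ ∈ Δ, c < δ := fun δ hδ => lt_of_le_of_lt h3 (h1 δ hδ)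
    have hmX : m ∈ below l.X (nx c) \ below l.X c := by
      refine ⟨⟨b, h4, h5⟩, ?_⟩
      rintro ⟨b', hb', hmb'⟩
      rw [l.X_unique hmb' h5] at hb'
      exact (lt_of_lt_of_le hb' h3).false
    have := (hG c h2 hcΔ).2 m hmX
    rw [← h6] at this
    exact ⟨b, c, h1, hcΔ, h2, h4, hmX, h6, this.1, this.2,
      l.nbr_sub_Y b ⟨⟨m, h5, this.2⟩, this.1.1.1⟩⟩
  -- the wife of `m` is removed in the block of the club to which `m` is assigned
  have block : ∀ m ∈ D ∪ L, ∃ c ∈ Cl F, g m ∈ B ∧ g m ∉ below l.Y c ∧ g m ∈ below l.Y (nx c) ∧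
      ((m ∈ D ∧ (∀ δ ∈ Δ, c < δ) ∧ m ∈ below l.X (nx c) \ below l.X c ∧
        g m = l.G c (nx c) (S c) m ∧ g m ∉ S c) ∨
        (m ∈ L ∧ a m = c ∧ g m ∈ S c)) ∧ E m (g m) := by
    rintro m (hm | hm)
    · obtain ⟨b, c, h1, h2, h3, h4, h5, h6, h7, h8, h9⟩ := hgD' m hm
      exact ⟨c, h3, h7.1.1, h7.1.2, ⟨b, h4, h9⟩, Or.inl ⟨hm, h2, h5, h6, h7.2⟩, h8⟩
    · have h1 := hw m hm
      rw [← hgL m hm] at h1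
      refine ⟨a m, haC m hm, h1.1.1, h1.1.2, ⟨a m, nx2 _, ?_⟩,
        Or.inr ⟨hm, rfl, m, hm, rfl, hgL m hm⟩, h1.2⟩
      rw [hgL m hm]
      exact l.w_mem_Y (haZ m hm)
  refine ⟨g, ⟨?_, ?_⟩, hgL, ?_⟩
  · intro m hm m' hm' he
    obtain ⟨c, h1, h2, h3, h4, h5, -⟩ := block m hm
    obtain ⟨c', h1', h2', h3', h4', h5', -⟩ := block m' hm'
    have hcc : c = c' := by
      rcases lt_trichotomy c c' with h | h | h
      · exact (h3' (he ▸ below_mono _ (nx3 c c' h1' h) h4)).elim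
      · exact h
      · exact (h3 (he ▸ below_mono _ (nx3 c' c h1 h) h4')).elim
    subst hcc
    rcases h5 with ⟨-, k1, k2, k3, k4⟩ | ⟨k1, k2, k3⟩ <;>
      rcases h5' with ⟨-, k1', k2', k3', k4'⟩ | ⟨k1', k2', k3'⟩
    · exact (hG c h1 k1).1 k2 k2' (k3.symm.trans (he.trans k3'))
    · exact (k4 (he ▸ k3')).elim
    · exact (k4' (he ▸ k3)).elim
    · exact ainj k1 k1' (k2.trans k2'.symm)
  · intro m hm
    obtain ⟨c, -, h2, -, -, -, h6⟩ := block m hm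
    exact ⟨h2, h6⟩
  · intro m hm
    obtain ⟨b, c, h1, h2, h3, h4, h5, h6, h7, h8, h9⟩ := hgD' m hm
    exact ⟨⟨b, h1, h9⟩, c, nx c, S c, hS c, h6⟩

end LadderFacts

/-! ### Regular cardinals, and the induction -/

section Regular
open Cardinal
variable {M W ι : Type u} [LinearOrder ι] {E : M → W → Prop} {A : Set M} {B : Set W}
  {Z₀ : ι → Set M} {ζ : W → Set M}

/-- The men of `L` are assigned distinct stages of a club at which they are already in `Z`. -/
lemma Ladder.assign (l : Ladder E A B Z₀ ζ) (hι : Idx ι) (F : ι → ι) {L : Set M} (hL : #L ≤ #ι)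
    (hLZ : ∀ m ∈ L, ∃ b, m ∈ l.Z b) :
    ∃ a : M → ι, InjOn a L ∧ (∀ m ∈ L, a m ∈ Cl F) ∧ ∀ m ∈ L, m ∈ below l.Z (a m) := by
  classical
  have hne : Nonempty ι := mk_ne_zero_iff.1 hι.reg.ne_zero
  obtain ⟨a, ainj, ha⟩ := hι.inj_choice hL (fun m => {c | c ∈ Cl F ∧ m.1 ∈ below l.Z c}) (by
    rintro ⟨m, hm⟩ b
    obtain ⟨β, hβ⟩ := hLZ m hm
    obtain ⟨c, hc, hlt⟩ := hι.cl_unbdd F (max b β)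
    exact ⟨c, ⟨hc, β, (le_max_right _ _).trans_lt hlt, hβ⟩, ((le_max_left _ _).trans_lt hlt).le⟩)
  let a' : M → ι := fun m => if h : m ∈ L then a ⟨m, h⟩ else Classical.arbitrary ι
  have ha' : ∀ m (h : m ∈ L), a' m = a ⟨m, h⟩ := fun m h => dif_pos h
  refine ⟨a', fun m hm m' hm' he => ?_, fun m hm => ?_, fun m hm => ?_⟩
  · rw [ha' m hm, ha' m' hm'] at he
    exact congrArg Subtype.val (ainj he)
  · rw [ha' m hm]
    exact (ha ⟨m, hm⟩).1
  · rw [ha' m hm]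
    exact (ha ⟨m, hm⟩).2

lemma exists_club {Φ : Set ι} (h : ¬ Stat Φ) : ∃ F : ι → ι, ∀ c ∈ Cl F, c ∉ Φ := by
  unfold Stat at h
  push Not at h
  obtain ⟨F, hF⟩ := h
  exact ⟨F, fun c hc hcΦ => hF c hcΦ hc⟩

/-- The regular case. The ladder collects in its sets `Z` the at most `#ι` unmatched men and,
for every woman that its matchings use, her husband under the given `φ`; the men outside these
sets keep their wives. -/
lemma QProp_regular [Nonempty M] [Nonempty W] (hι : Idx ι)
    (hQ : ∀ κ, ℵ₀ ≤ κ → κ < #ι → QProp E κ) : QProp E #ι := by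
  classical
  intro A B H φ hu hH hφ
  obtain ⟨e⟩ := hH
  have hinf : ℵ₀ ≤ #ι := hι.reg.aleph0_le
  obtain ⟨l⟩ := exists_ladder hι E A B (fun b => {m | ∃ h : m ∈ H, e ⟨m, h⟩ = b})
    (fun v => {m | m ∈ A \ H ∧ φ m = v})
    (fun b => hι.small_finite (Set.Subsingleton.finite (by
      rintro m ⟨h, rfl⟩ m' ⟨h', he⟩
      exact congrArg Subtype.val (e.injective he.symm))))
    (fun v => hι.small_finite (Set.Subsingleton.finite (by
      rintro m ⟨h, rfl⟩ m' ⟨h', he⟩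
      exact hφ.1 h h' he.symm)))
  obtain ⟨F, hF⟩ := exists_club (l.not_stat hι hu)
  let Zf : Set M := ⋃ b, l.Z b
  have hHZ : H ⊆ Zf := fun m hm => mem_iUnion.2 ⟨e ⟨m, hm⟩, l.Z₀sub _ ⟨hm, rfl⟩⟩
  let D : Set M := {m | ∃ b, (∀ δ ∈ (∅ : Set ι), b < δ) ∧ m ∈ l.X b}
  let L : Set M := (A ∩ Zf) \ D
  have hLcard : #L ≤ #ι :=
    (mk_le_mk_of_subset (fun m hm => hm.1.2 : L ⊆ Zf)).trans ((mk_iUnion_le l.Z).trans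
      (mul_le_of_le hinf le_rfl (ciSup_le' fun b => (l.Zsmall b).le)))
  obtain ⟨a, ainj, haC, haZ⟩ := l.assign hι F hLcard fun m hm => mem_iUnion.1 hm.1.2
  obtain ⟨g, hg, hgL, hgD⟩ := l.combine hι hQ hF (empty_subset _) (D := D) rfl
    (fun m hm => hm.1.1 : L ⊆ A) (fun m hm => hm.2) ainj haC haZ (fun _ _ _ h => h.elim)
  have hAZ : A ∩ Zf ⊆ D ∪ L := fun m hm => by
    by_cases h : m ∈ D
    · exact Or.inl h
    · exact Or.inr ⟨hm, h⟩
  have hlarge : ∀ m ∈ Zf, ∃ b, ∀ b' ≥ b, m ∈ below l.Z b' := by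
    intro m hm
    obtain ⟨β, hβ⟩ := mem_iUnion.1 hm
    obtain ⟨c, -, hc⟩ := hι.cl_unbdd id β
    exact ⟨c, fun b' hb' => ⟨β, lt_of_lt_of_le hc hb', hβ⟩⟩
  -- the former husbands of the women used by `g` on `Zf` lie in `Zf`
  have hclosed : ∀ m ∈ A ∩ Zf, ∀ m' ∈ A \ H, φ m' = g m → m' ∈ Zf := by
    intro m hm m' hm' he
    obtain ⟨b, hb⟩ := hlarge m hm.2
    rcases hAZ hm with h | h
    · obtain ⟨-, c, d, S, hS, hG⟩ := hgD m h
      have hmem := l.ZG (max b (max c d)) c ((le_max_left _ _).trans (le_max_right _ _)) d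
        ((le_max_right _ _).trans (le_max_right _ _)) S (by
          rcases hS with h | ⟨m'', hm'', rfl, h⟩
          · exact Or.inl h
          · exact Or.inr ⟨m'', below_mono _ ((le_max_left _ _).trans (le_max_right _ _))
              (haZ m'' hm''), h⟩) m (hb _ (le_max_left _ _))
      exact mem_iUnion.2 ⟨_, hmem ⟨hm', he.trans hG⟩⟩
    · have hmem := l.Zw (max b (a m)) (a m) (le_max_right _ _) m (hb _ (le_max_left _ _))
      exact mem_iUnion.2 ⟨_, hmem ⟨hm', he.trans (hgL m h)⟩⟩
  refine ⟨fun m => if m ∈ Zf then g m else φ m, ?_, ?_⟩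
  · intro m hm m' hm' he
    by_cases h : m ∈ Zf <;> by_cases h' : m' ∈ Zf <;> simp only [h, h', if_true, if_false] at he
    · exact hg.1 (hAZ ⟨hm, h⟩) (hAZ ⟨hm', h'⟩) he
    · exact (h' (hclosed m ⟨hm, h⟩ m' ⟨hm', fun k => h' (hHZ k)⟩ he.symm)).elim
    · exact (h (hclosed m' ⟨hm', h'⟩ m ⟨hm, fun k => h (hHZ k)⟩ he)).elim
    · exact hφ.1 ⟨hm, fun k => h (hHZ k)⟩ ⟨hm', fun k => h' (hHZ k)⟩ he
  · intro m hm
    by_cases h : m ∈ Zf <;> simp only [h, if_true, if_false]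
    · exact hg.2 m (hAZ ⟨hm, h⟩)
    · exact hφ.2 m ⟨hm, fun k => h (hHZ k)⟩

/-- Fewer than `#ι` men are married off by running a ladder up to a sufficiently late stage `δ` at
which the remaining graph is unhindered. -/
lemma SProp_of_lt [Nonempty M] [Nonempty W] (hι : Idx ι) (hQ : ∀ κ, ℵ₀ ≤ κ → κ < #ι → QProp E κ)
    {c : Cardinal.{u}} (hc : c < #ι) : SProp E c := by
  classical
  intro A B hu Z hZA hZ
  have hne : Nonempty ι := mk_ne_zero_iff.1 hι.reg.ne_zero
  have hZs : Small ι Z := hZ.trans_lt hc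
  obtain ⟨l⟩ := exists_ladder hι E A B (fun _ => Z) (fun _ => ∅) (fun _ => hZs)
    (fun _ => hι.small_finite finite_empty)
  obtain ⟨F, hF⟩ := exists_club (l.not_stat hι hu)
  obtain ⟨a, ainj, haC, haZ⟩ := l.assign hι F (L := Z) hZs.le
    fun m hm => ⟨Classical.arbitrary ι, l.Z₀sub _ hm⟩
  obtain ⟨b, hb⟩ := hι.bdd (a '' Z) (hZs.image a)
  obtain ⟨δ, hδ, hbδ⟩ := hι.cl_unbdd F b
  have haδ : ∀ m ∈ Z, a m < δ := fun m hm => (hb _ ⟨m, hm, rfl⟩).trans hbδ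
  let D : Set M := below l.X δ
  have hDA : D ⊆ A := fun m ⟨b, _, hm⟩ => (l.X_sub b hm).1
  obtain ⟨g, hg, hgL, hgD⟩ := l.combine hι hQ hF (Δ := {δ}) (D := D) (L := Z \ D) (a := a)
    (by rintro _ rfl; exact hδ)
    (by ext m; simp [D, below]) (fun m hm => hZA hm.1) (fun m hm => hm.2)
    (ainj.mono sdiff_subset) (fun m hm => haC m hm.1) (fun m hm => haZ m hm.1)
    (by rintro m hm _ rfl; exact haδ m hm.1)
  refine ⟨D ∪ Z \ D, below l.Y δ ∩ B, g, ⟨?_, inter_subset_right, ⟨hg.1, fun m hm => ?_⟩, ?_⟩, ?_⟩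
  · exact union_subset hDA fun m hm => hZA hm.1
  · refine ⟨⟨?_, (hg.2 m hm).1⟩, (hg.2 m hm).2⟩
    rcases hm with hm | hm
    · obtain ⟨⟨b', h1, h2⟩, -⟩ := hgD m hm
      exact ⟨b', h1 δ rfl, h2⟩
    · rw [hgL m hm]
      exact ⟨a m, haδ m hm.1, l.w_mem_Y (haZ m hm.1)⟩
  · intro h
    have : B \ (below l.Y δ ∩ B) = B \ below l.Y δ := by
      ext v; simp only [mem_sdiff, mem_inter_iff]; tauto
    rw [this] at h
    exact hF δ hδ (h.mono (sdiff_subset_sdiff_right subset_union_left))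
  · intro m hm
    by_cases h : m ∈ D
    · exact Or.inl h
    · exact Or.inr ⟨hm, h⟩

end Regular

section Conclusion
open Cardinal
variable {M W : Type u} {E : M → W → Prop}

lemma QProp_all [Nonempty M] [Nonempty W] (κ : Cardinal.{u}) (hκ : ℵ₀ ≤ κ) : QProp E κ := by
  induction κ using WellFoundedLT.induction with
  | ind κ ih =>
    rcases hκ.eq_or_lt with rfl | hlt
    · exact QProp_aleph0
    rcases isRegular_or_isSingular hκ with hr | hs
    · have := QProp_regular (E := E) (exists_idx hr hlt) (fun c h1 h2 =>
        ih c (by rwa [mk_ord_toType] at h2) h1)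
      rwa [mk_ord_toType] at this
    · refine QProp_singular hs (fun c h1 h2 => ?_) hlt
      have hι := exists_idx (isRegular_succ h1) (h1.trans_lt (Order.lt_succ c))
      refine SProp_of_lt hι (fun d h3 h4 => ?_) (by rw [mk_ord_toType]; exact Order.lt_succ c)
      rw [mk_ord_toType] at h4
      exact ih d ((Order.lt_succ_iff.1 h4).trans_lt h2) h3

/-- An unhindered graph has a marriage. -/
lemma exists_matching [Nonempty M] [Nonempty W] {A : Set M} {B : Set W} (hu : ¬ Hind E A B) :
    ∃ g, IsMatching E A B g :=
  QProp_all (max #A ℵ₀) (le_max_right _ _) A B A (fun _ => Classical.arbitrary W) hu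
    (le_max_left _ _) ⟨by simp, by simp⟩

/-- Without a marriage, the union of all waves is a wave that cannot be matched into its
neighbourhood: the graph outside the largest wave has no nonempty wave, so it is unhindered and a
matching of the largest wave would extend to a marriage. -/
lemma exists_critical [Nonempty M] [Nonempty W] (hno : ¬ ∃ g, IsMatching E univ univ g) :
    ∃ X f, IsWave E univ univ X f ∧ ¬ ∃ g, IsMatching E X (Nbr E X) g := by
  classical
  let I := {X : Set M // ∃ f, IsWave E univ univ X f}
  obtain ⟨f, hf⟩ := wave_iUnion (E := E) (A := univ) (B := univ) (fun X : I => X.1) (fun X => X.2)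
  have hmax : ∀ Y, (∃ f, IsWave E univ univ Y f) → Y ⊆ ⋃ X : I, X.1 := fun Y hY =>
    subset_iUnion (fun X : I => X.1) ⟨Y, hY⟩
  generalize (⋃ X : I, X.1) = X at hf hmax
  refine ⟨X, f, hf, fun ⟨g, hg⟩ => hno ?_⟩
  have hu : ¬ Hind E Xᶜ (Nbr E X)ᶜ := by
    rintro ⟨Y, h, f', h1, h2, h3, h4⟩
    refine h1 h2 (hmax (X ∪ Y) ⟨fun w => if w ∈ Nbr E X then f w else f' w, subset_univ _,
      ?_, ?_⟩ (Or.inr h2))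
    · have hN : ∀ w ∈ Nbr E (X ∪ Y), w ∉ Nbr E X → w ∈ Nbr E Y ∩ (Nbr E X)ᶜ := by
        rintro w ⟨x, hx | hx, hxw⟩ hw
        · exact (hw ⟨x, hx, hxw⟩).elim
        · exact ⟨⟨x, hx, hxw⟩, hw⟩
      rintro w ⟨hw, -⟩ w' ⟨hw', -⟩ he
      by_cases k : w ∈ Nbr E X <;> by_cases k' : w' ∈ Nbr E X <;>
        simp only [k, k', if_true, if_false] at he
      · exact hf.2.1 ⟨k, trivial⟩ ⟨k', trivial⟩ he
      · exact (h1 (h4 w' (hN w' hw' k')).1 (he ▸ (hf.2.2 w ⟨k, trivial⟩).1)).elim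
      · exact (h1 (h4 w (hN w hw k)).1 (he ▸ (hf.2.2 w' ⟨k', trivial⟩).1)).elim
      · exact h3 (hN w hw k) (hN w' hw' k') he
    · rintro w ⟨⟨x, hx, hxw⟩, -⟩
      by_cases k : w ∈ Nbr E X <;> simp only [k, if_true, if_false]
      · exact ⟨Or.inl (hf.2.2 w ⟨k, trivial⟩).1, (hf.2.2 w ⟨k, trivial⟩).2⟩
      · have := h4 w ⟨⟨x, hx.resolve_left fun hx => k ⟨x, hx, hxw⟩, hxw⟩, k⟩
        exact ⟨Or.inr this.1, this.2.2⟩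
  obtain ⟨g', hg'⟩ := exists_matching hu
  refine ⟨fun m => if m ∈ X then g m else g' m, ?_, ?_⟩
  · intro m _ m' _ he
    by_cases k : m ∈ X <;> by_cases k' : m' ∈ X <;> simp only [k, k', if_true, if_false] at he
    · exact hg.1 k k' he
    · exact ((hg'.2 m' k').1 (he ▸ (hg.2 m k).1)).elim
    · exact ((hg'.2 m k).1 (he ▸ (hg.2 m' k').1)).elim
    · exact hg'.1 k k' he
  · intro m _
    by_cases k : m ∈ X <;> simp only [k, if_true, if_false]
    · exact ⟨trivial, (hg.2 m k).2⟩
    · exact ⟨trivial, (hg'.2 m k).2⟩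

end Conclusion

end Marriage

/-- The infinite marriage theorem: in a (possibly infinite) bipartite graph
with sides `M` and `W`, there is no marriage of `M` if and only if there is a
set `A ⊆ M` such that `N(A)` is matchable into `A` but `A` is not matchable
into `N(A)`. -/
theorem marriage_criterion (M W : Type*) (E : M → W → Prop) :
    (¬ ∃ f : M → W, Function.Injective f ∧ ∀ m, E m (f m)) ↔
      ∃ A : Set M,
        (∃ g : {w : W // ∃ a ∈ A, E a w} → {a : M // a ∈ A},
            Function.Injective g ∧ ∀ w, E (g w).1 w.1) ∧
        ¬ ∃ h : {a : M // a ∈ A} → {w : W // ∃ a ∈ A, E a w},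
            Function.Injective h ∧ ∀ a, E a.1 (h a).1 := by
  constructor
  · intro hno
    rcases isEmpty_or_nonempty M with hM | hM
    · exact (hno ⟨fun m => hM.elim m, fun m => hM.elim m, fun m => hM.elim m⟩).elim
    rcases isEmpty_or_nonempty W with hW | hW
    · refine ⟨Set.univ, ⟨fun w => hW.elim w.1, fun w => hW.elim w.1, fun w => hW.elim w.1⟩, ?_⟩
      rintro ⟨h, -⟩
      exact hW.elim (h ⟨Classical.arbitrary M, trivial⟩).1
    -- lift both sides to a common universe
    obtain ⟨X, f, hf, hX⟩ := Marriage.exists_critical (M := ULift.{u_2} M) (W := ULift.{u_1} W)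
      (E := fun m w => E m.down w.down) (by
        rintro ⟨g, hg⟩
        refine hno ⟨fun m => (g ⟨m⟩).down, fun m m' he => ?_, fun m => (hg.2 ⟨m⟩ trivial).2⟩
        exact congrArg ULift.down (hg.1 trivial trivial (ULift.down_injective he)))
    refine ⟨{m | ULift.up m ∈ X}, ?_, ?_⟩
    · have hN : ∀ w : {w : W // ∃ a ∈ {m | ULift.up m ∈ X}, E a w},
          ULift.up w.1 ∈ Marriage.Nbr (fun m w => E m.down w.down) X ∩ Set.univ :=
        fun ⟨w, a, ha, hw⟩ => ⟨⟨⟨a⟩, ha, hw⟩, trivial⟩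
      refine ⟨fun w => ⟨(f ⟨w.1⟩).down, (hf.2.2 _ (hN w)).1⟩, fun w w' he => ?_,
        fun w => (hf.2.2 _ (hN w)).2⟩
      exact Subtype.ext (congrArg ULift.down
        (hf.2.1 (hN w) (hN w') (ULift.down_injective (congrArg Subtype.val he))))
    · rintro ⟨h, hinj, hE⟩
      classical
      let g : ULift.{u_2} M → ULift.{u_1} W := fun m =>
        if hm : m ∈ X then ⟨(h ⟨m.down, hm⟩).1⟩ else ⟨Classical.arbitrary W⟩
      have hg : ∀ m (hm : m ∈ X), g m = ⟨(h ⟨m.down, hm⟩).1⟩ := fun m hm => dif_pos hm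
      refine hX ⟨g, fun m hm m' hm' he => ?_, fun m hm => ?_⟩
      · rw [hg m hm, hg m' hm'] at he
        exact ULift.down_injective (congrArg Subtype.val
          (hinj (Subtype.ext (congrArg ULift.down he))))
      · rw [hg m hm]
        exact ⟨⟨m, hm, hE ⟨m.down, hm⟩⟩, hE ⟨m.down, hm⟩⟩
  · rintro ⟨A, -, hA⟩ ⟨f, finj, hf⟩
    exact hA ⟨fun a => ⟨f a.1, a.1, a.2, hf a.1⟩,
      fun a a' he => Subtype.ext (finj (congrArg Subtype.val he)), fun a => hf a.1⟩
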